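/- arXiv:2302.13588 — 4 statements merged into one kernel-verified Lean document; each statement's English description precedes it below -/
import Mathlib

section
/- Let Ω ∈ k[x₁,x₂,x₃] be a nonzero homogeneous polynomial of degree 3, and equip P = k[x₁,x₂,x₃] with the unimodular (Jacobian) Poisson bracket determined by {x₁,x₂} = ∂Ω/∂x₃, {x₂,x₃} = ∂Ω/∂x₁, {x₃,x₁} = ∂Ω/∂x₂. Let G be a finite subgroup of the graded Poisson automorphism group of P. Then the invariant subalgebra P^G is isomorphic to P as a Poisson algebra if and only if G is trivial. -/
open MvPolynomial

/-- The bracket on `k[x₁,x₂,x₃]` determined by the values `p12 = {x₁,x₂}`, `p23 = {x₂,x₃}`,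
`p31 = {x₃,x₁}` via `{f,g} = Σ_{i<j} (∂f/∂xᵢ·∂g/∂xⱼ − ∂f/∂xⱼ·∂g/∂xᵢ)·{xᵢ,xⱼ}`. -/
noncomputable def jacBracket {k : Type*} [Field k] (p12 p23 p31 : MvPolynomial (Fin 3) k)
    (f g : MvPolynomial (Fin 3) k) : MvPolynomial (Fin 3) k :=
  (pderiv 0 f * pderiv 1 g - pderiv 1 f * pderiv 0 g) * p12 +
    (pderiv 1 f * pderiv 2 g - pderiv 2 f * pderiv 1 g) * p23 +
    (pderiv 2 f * pderiv 0 g - pderiv 0 f * pderiv 2 g) * p31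

/-- A graded Poisson automorphism: an algebra automorphism preserving the degree-one
component and the Poisson bracket. -/
def IsGradedPoissonAut {k : Type*} [Field k]
    (br : MvPolynomial (Fin 3) k → MvPolynomial (Fin 3) k → MvPolynomial (Fin 3) k)
    (φ : MvPolynomial (Fin 3) k ≃ₐ[k] MvPolynomial (Fin 3) k) : Prop :=
  (∀ i, (φ (X i)).IsHomogeneous 1) ∧ ∀ f g, φ (br f g) = br (φ f) (φ g)

/-- A Poisson reflection: a graded Poisson automorphism of finite order whose restriction to
the degree-one part (as a matrix) has eigenvalues `1, 1, ξ` for some root of unity `ξ ≠ 1`. -/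
def IsPoissonReflection {k : Type*} [Field k]
    (br : MvPolynomial (Fin 3) k → MvPolynomial (Fin 3) k → MvPolynomial (Fin 3) k)
    (φ : MvPolynomial (Fin 3) k ≃ₐ[k] MvPolynomial (Fin 3) k) : Prop :=
  IsGradedPoissonAut br φ ∧ (∃ n, 0 < n ∧ φ ^ n = 1) ∧
    ∃ M : Matrix (Fin 3) (Fin 3) k, (∀ i, φ (X i) = ∑ j, C (M i j) * X j) ∧
      ∃ ξ : k, ξ ≠ 1 ∧ (∃ m, 0 < m ∧ ξ ^ m = 1) ∧
        M.charpoly = (Polynomial.X - 1) ^ 2 * (Polynomial.X - Polynomial.C ξ)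

/-- `P^G ≅ P` as Poisson algebras: there is an injective algebra map `e : P → P` preserving
the bracket whose range is the invariant subalgebra `P^G`. -/
def InvariantsPoissonIso {k : Type*} [Field k]
    (br : MvPolynomial (Fin 3) k → MvPolynomial (Fin 3) k → MvPolynomial (Fin 3) k)
    (G : Subgroup (MvPolynomial (Fin 3) k ≃ₐ[k] MvPolynomial (Fin 3) k)) : Prop :=
  ∃ e : MvPolynomial (Fin 3) k →ₐ[k] MvPolynomial (Fin 3) k,
    Function.Injective e ∧
    Set.range e = {f : MvPolynomial (Fin 3) k | ∀ φ ∈ G, φ f = f} ∧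
    ∀ f g, e (br f g) = br (e f) (e g)


section Basics
variable {k : Type*} [Field k]

lemma chain_rule (e : MvPolynomial (Fin 3) k →ₐ[k] MvPolynomial (Fin 3) k) (j : Fin 3)
    (f : MvPolynomial (Fin 3) k) :
    pderiv j (e f) = ∑ i, e (pderiv i f) * pderiv j (e (X i)) := by
  induction f using MvPolynomial.induction_on with
  | C a => simp [← MvPolynomial.algebraMap_eq]
  | add p q hp hq =>
    simp only [map_add, hp, hq, add_mul, Finset.sum_add_distrib]
  | mul_X p n hp =>
    rw [map_mul, Derivation.leibniz, hp]
    simp only [Derivation.leibniz, smul_eq_mul, map_add, map_mul, add_mul, Finset.sum_add_distrib,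
      pderiv_X]
    rw [Finset.mul_sum]
    congr 1
    · rw [Finset.sum_eq_single n]
      · simp
      · intro b _ hb
        simp [hb.symm]
      · simp
    · refine Finset.sum_congr rfl fun i _ => by ring

/-- A derivation of a domain of characteristic zero killing the coefficients of a monic
polynomial kills its roots. -/
lemma deriv_root {R : Type*} [CommRing R] [IsDomain R] [CharZero R] [Algebra k R]
    (δ : Derivation k R R) (b : R) (n : ℕ) (p : Polynomial R) (hn : p.natDegree = n)
    (hp : p ≠ 0) (hc : ∀ i, δ (p.coeff i) = 0) (hr : p.eval b = 0) : δ b = 0 := by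
  induction n generalizing p with
  | zero =>
    rw [Polynomial.eq_C_of_natDegree_eq_zero hn] at hr hp
    simp only [Polynomial.eval_C] at hr
    simp [hr] at hp
  | succ n ih =>
    have h1 : δ (p.eval b) = p.derivative.eval b * δ b := by
      have h2 : ∀ i, δ (p.coeff i * b ^ i) = p.coeff i * (i * b ^ (i-1)) * δ b := by
        intro i
        rw [Derivation.leibniz, hc, Derivation.leibniz_pow]
        simp only [smul_eq_mul, nsmul_eq_mul, mul_zero, add_zero]
        ring
      rw [Polynomial.eval_eq_sum, Polynomial.sum, map_sum, Polynomial.derivative_eval,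
        Polynomial.sum, Finset.sum_mul]
      refine Finset.sum_congr rfl fun i _ => ?_
      rw [h2]; ring
    rw [hr, map_zero] at h1
    rcases mul_eq_zero.1 h1.symm with h | h
    · have hd : p.derivative.natDegree = n := by
        rw [Polynomial.natDegree_derivative, hn]; rfl
      refine ih p.derivative hd ?_ ?_ h
      · intro h0
        have := Polynomial.derivative_eq_zero.1 h0
        omega
      · intro i
        rw [Polynomial.coeff_derivative, Derivation.leibniz, hc]
        have : δ ((i : R) + 1) = 0 := by
          simp
        simp [this]
    · exact h

/-- The Jacobian bracket of `Ω`. -/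
noncomputable abbrev br (Ω : MvPolynomial (Fin 3) k) (f g : MvPolynomial (Fin 3) k) :
    MvPolynomial (Fin 3) k := jacBracket (pderiv 2 Ω) (pderiv 0 Ω) (pderiv 1 Ω) f g

/-- `e` is a finite Poisson endomorphism. -/
def Good (Ω : MvPolynomial (Fin 3) k) (e : MvPolynomial (Fin 3) k →ₐ[k] MvPolynomial (Fin 3) k) :
    Prop :=
  (∀ f g, e (br Ω f g) = br Ω (e f) (e g)) ∧
    ∀ f, ∃ p : Polynomial (MvPolynomial (Fin 3) k), p.Monic ∧
      Polynomial.eval₂ (e : MvPolynomial (Fin 3) k →+* MvPolynomial (Fin 3) k) f p = 0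

/-- There is a reflection along `l` fixing the image of `e`. -/
def Refl (Ω : MvPolynomial (Fin 3) k) (e : MvPolynomial (Fin 3) k →ₐ[k] MvPolynomial (Fin 3) k)
    (l : MvPolynomial (Fin 3) k) : Prop :=
  ∃ φ : MvPolynomial (Fin 3) k →ₐ[k] MvPolynomial (Fin 3) k,
    (∀ f, φ (e f) = e f) ∧ (∀ f g, φ (br Ω f g) = br Ω (φ f) (φ g)) ∧
    ∃ (d : Fin 3 → k) (ξ : k), ξ ≠ 1 ∧ ξ ≠ 0 ∧ (∀ i, φ (X i) = X i + C (d i) * l) ∧ φ l = C ξ * l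

lemma Good.killed [CharZero k] {Ω : MvPolynomial (Fin 3) k}
    {e : MvPolynomial (Fin 3) k →ₐ[k] MvPolynomial (Fin 3) k} (h : Good Ω e)
    {R : Type*} [CommRing R] [IsDomain R] [Algebra k R]
    (π : MvPolynomial (Fin 3) k →ₐ[k] R) (δ : Derivation k R R)
    (hδ : ∀ i, δ (π (e (X i))) = 0) (f : MvPolynomial (Fin 3) k) : δ (π f) = 0 := by
  have : CharZero R := charZero_of_injective_algebraMap (algebraMap k R).injective
  have hall : ∀ f, δ (π (e f)) = 0 := by
    intro f
    induction f using MvPolynomial.induction_on with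
    | C a =>
      simp [← MvPolynomial.algebraMap_eq]
    | add p q hp hq => simp [hp, hq]
    | mul_X p n hp => simp [hp, hδ]
  obtain ⟨p, hp, hr⟩ := h.2 f
  refine deriv_root δ (π f) _
    (p.map ((π : MvPolynomial (Fin 3) k →+* R).comp
      (e : MvPolynomial (Fin 3) k →+* MvPolynomial (Fin 3) k))) rfl
    (hp.map _).ne_zero ?_ ?_
  · intro i
    rw [Polynomial.coeff_map]
    exact hall _
  · rw [Polynomial.eval_map]
    have := congrArg (π : MvPolynomial (Fin 3) k →+* R) hr
    rw [Polynomial.hom_eval₂] at this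
    simpa using this

end Basics


section Endgame
variable {k : Type*} [Field k]

lemma C_ne_one {ξ : k} (h : ξ ≠ 1) : (C ξ : MvPolynomial (Fin 3) k) ≠ 1 := by
  intro h1
  exact h (C_injective (Fin 3) k (by rw [h1, C_1]))

/-- Restriction to the plane `x₀ = 0`. -/
noncomputable def piH : MvPolynomial (Fin 3) k →ₐ[k] MvPolynomial (Fin 3) k :=
  aeval ![0, X 1, X 2]

/-- Restriction to the line `x₀ = x₁ = 0`. -/
noncomputable def rhoL : MvPolynomial (Fin 3) k →ₐ[k] Polynomial k :=
  aeval ![0, 0, Polynomial.X]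

@[simp] lemma piH_X0 : piH (X 0 : MvPolynomial (Fin 3) k) = 0 := by simp [piH]
@[simp] lemma piH_X1 : piH (X 1 : MvPolynomial (Fin 3) k) = X 1 := by simp [piH]
@[simp] lemma piH_X2 : piH (X 2 : MvPolynomial (Fin 3) k) = X 2 := by simp [piH]
@[simp] lemma piH_C (a : k) : piH (C a : MvPolynomial (Fin 3) k) = C a := by
  simp [piH, MvPolynomial.algebraMap_eq]
@[simp] lemma rhoL_X0 : rhoL (X 0 : MvPolynomial (Fin 3) k) = 0 := by simp [rhoL]
@[simp] lemma rhoL_X1 : rhoL (X 1 : MvPolynomial (Fin 3) k) = 0 := by simp [rhoL]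
@[simp] lemma rhoL_X2 : rhoL (X 2 : MvPolynomial (Fin 3) k) = Polynomial.X := by simp [rhoL]
@[simp] lemma rhoL_C (a : k) : rhoL (C a : MvPolynomial (Fin 3) k) = Polynomial.C a := by
  simp [rhoL, Polynomial.algebraMap_eq]

@[simp] lemma rhoL_piH (f : MvPolynomial (Fin 3) k) : rhoL (piH f) = rhoL f := by
  have : (rhoL : MvPolynomial (Fin 3) k →ₐ[k] _).comp piH = rhoL := by
    ext i : 1
    fin_cases i <;> simp
  exact DFunLike.congr_fun this f

@[simp] lemma piH_piH (f : MvPolynomial (Fin 3) k) : piH (piH f) = piH f := by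
  have : (piH : MvPolynomial (Fin 3) k →ₐ[k] _).comp piH = piH := by
    ext i : 1
    fin_cases i <;> simp
  exact DFunLike.congr_fun this f

lemma pd1_piH (f : MvPolynomial (Fin 3) k) : pderiv 1 (piH f) = piH (pderiv 1 f) := by
  rw [chain_rule]; simp [Fin.sum_univ_three, pderiv_X]

lemma pd2_piH (f : MvPolynomial (Fin 3) k) : pderiv 2 (piH f) = piH (pderiv 2 f) := by
  rw [chain_rule]; simp [Fin.sum_univ_three, pderiv_X]

lemma rhoL_deriv (f : MvPolynomial (Fin 3) k) :
    Polynomial.derivative (rhoL f) = rhoL (pderiv 2 f) := by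
  induction f using MvPolynomial.induction_on with
  | C a => simp
  | add p q hp hq => simp [hp, hq]
  | mul_X p n hp =>
    rw [map_mul, Polynomial.derivative_mul, hp, Derivation.leibniz]
    fin_cases n <;> simp [pderiv_X]
    ring

lemma dvd_sub_hom (q : MvPolynomial (Fin 3) k)
    (φ ψ : MvPolynomial (Fin 3) k →ₐ[k] MvPolynomial (Fin 3) k)
    (h : ∀ i, q ∣ φ (X i) - ψ (X i)) (f : MvPolynomial (Fin 3) k) : q ∣ φ f - ψ f := by
  induction f using MvPolynomial.induction_on with
  | C a => simp [← MvPolynomial.algebraMap_eq]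
  | add p r hp hr =>
    have : φ (p + r) - ψ (p + r) = (φ p - ψ p) + (φ r - ψ r) := by simp only [map_add]; ring
    rw [this]; exact dvd_add hp hr
  | mul_X p n hp =>
    have : φ (p * X n) - ψ (p * X n) = (φ p - ψ p) * φ (X n) + ψ p * (φ (X n) - ψ (X n)) := by
      simp only [map_mul]; ring
    rw [this]; exact dvd_add (hp.mul_right _) ((h n).mul_left _)

lemma X0_dvd_sub (f : MvPolynomial (Fin 3) k) : X 0 ∣ f - piH f := by
  refine dvd_sub_hom (X 0) (AlgHom.id k _) piH ?_ f
  intro i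
  fin_cases i <;> simp

lemma X0_dvd {f : MvPolynomial (Fin 3) k} (h : piH f = 0) : X 0 ∣ f := by
  have := X0_dvd_sub f
  rwa [h, sub_zero] at this

lemma X1_dvd {f : MvPolynomial (Fin 3) k} (hf : piH f = f) (h : rhoL f = 0) : X 1 ∣ f := by
  have := dvd_sub_hom (X 1) piH ((Polynomial.aeval (X 2)).comp (rhoL (k := k))) (by
    intro i
    fin_cases i <;> simp) f
  simpa [h, hf] using this

lemma X1_fac {f : MvPolynomial (Fin 3) k} (hf : piH f = f) (h0 : f ≠ 0) :
    ∃ (N : ℕ) (u : MvPolynomial (Fin 3) k), f = X 1 ^ N * u ∧ piH u = u ∧ rhoL u ≠ 0 := by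
  have hX : Prime (X 1 : MvPolynomial (Fin 3) k) := MvPolynomial.X_prime
  obtain ⟨u, h1, h2⟩ := (FiniteMultiplicity.of_prime_left hX h0).exists_eq_pow_mul_and_not_dvd
  generalize multiplicity (X 1) f = N at h1
  have h3 : piH u = u := by
    have : X 1 ^ N * piH u = X 1 ^ N * u := by
      rw [← h1]
      conv_rhs => rw [← hf, h1]
      simp
    exact mul_left_cancel₀ (pow_ne_zero _ hX.ne_zero) this
  exact ⟨N, u, h1, h3, fun h => h2 (X1_dvd h3 h)⟩

/-- Jacobian in the last two variables -/
noncomputable def jac (f g : MvPolynomial (Fin 3) k) : MvPolynomial (Fin 3) k :=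
  pderiv 1 f * pderiv 2 g - pderiv 2 f * pderiv 1 g

lemma lineDim [CharZero k] {Ω : MvPolynomial (Fin 3) k}
    {e : MvPolynomial (Fin 3) k →ₐ[k] MvPolynomial (Fin 3) k} (h : Good Ω e)
    (h0 : ∀ i, Polynomial.derivative (rhoL (e (X i))) = 0) : False := by
  have := h.killed rhoL Polynomial.derivative' (by simpa using h0) (X 2)
  simp at this

lemma planeDim [CharZero k] {Ω : MvPolynomial (Fin 3) k}
    {e : MvPolynomial (Fin 3) k →ₐ[k] MvPolynomial (Fin 3) k} (h : Good Ω e)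
    (h0 : ∀ i j, jac (piH (e (X i))) (piH (e (X j))) = 0) : False := by
  have key : ∀ i, pderiv 1 (piH (e (X i))) = 0 := by
    intro i
    have := h.killed piH ((pderiv 1 (piH (e (X i)))) • pderiv 2 -
      (pderiv 2 (piH (e (X i)))) • pderiv 1) (by
        intro j
        simpa [jac] using h0 i j) (X 2)
    simpa [pderiv_X] using this
  have := h.killed piH (pderiv 1) key (X 1)
  simp at this

lemma jac_self (f : MvPolynomial (Fin 3) k) : jac f f = 0 := by simp only [jac]; ring
lemma jac_symm (f g : MvPolynomial (Fin 3) k) : jac f g = - jac g f := by simp only [jac]; ring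
lemma jac_zero (f : MvPolynomial (Fin 3) k) : jac f 0 = 0 := by simp [jac]
lemma zero_jac (f : MvPolynomial (Fin 3) k) : jac 0 f = 0 := by simp [jac]

lemma planeDim' [CharZero k] {Ω : MvPolynomial (Fin 3) k}
    {e : MvPolynomial (Fin 3) k →ₐ[k] MvPolynomial (Fin 3) k} (h : Good Ω e)
    (h01 : jac (piH (e (X 0))) (piH (e (X 1))) = 0)
    (h12 : jac (piH (e (X 1))) (piH (e (X 2))) = 0)
    (h02 : jac (piH (e (X 0))) (piH (e (X 2))) = 0) : False := by
  refine planeDim h ?_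
  have h10 := h01
  have h21 := h12
  have h20 := h02
  rw [jac_symm, neg_eq_zero] at h10 h21 h20
  have hs := jac_self (k := k)
  generalize hy : (fun i => piH (e (X i))) = y at *
  have hy' : ∀ i, piH (e (X i)) = y i := fun i => by rw [← hy]
  simp only [hy'] at *
  intro i j
  match i, j with
  | 0, 0 => exact hs _
  | 0, 1 => exact h01
  | 0, 2 => exact h02
  | 1, 0 => exact h10
  | 1, 1 => exact hs _
  | 1, 2 => exact h12
  | 2, 0 => exact h20
  | 2, 1 => exact h21
  | 2, 2 => exact hs _

/-- Triple plane -/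
lemma end_cube [CharZero k] (c : k) (hc : c ≠ 0)
    (e : MvPolynomial (Fin 3) k →ₐ[k] MvPolynomial (Fin 3) k)
    (h : Good (C c * X 0 ^ 3) e) (hr : Refl (C c * X 0 ^ 3) e (X 0)) : False := by
  obtain ⟨φ, hφe, -, d, ξ, hξ, hξ0, hφX, hφl⟩ := hr
  have hb : ∀ f g, br (C c * X 0 ^ 3) f g = (3 * C c) * X 0 ^ 2 * jac f g := by
    intro f g
    simp [br, jacBracket, jac, pderiv_X, Derivation.leibniz_pow]
    ring
  have hC : (3 * C c) ≠ (0 : MvPolynomial (Fin 3) k) := by simpa using hc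
  have hX : (X 0 : MvPolynomial (Fin 3) k) ≠ 0 := X_ne_zero 0
  have h12 := h.1 (X 1) (X 2)
  rw [hb, hb] at h12
  have hj : jac (X 1) (X 2) = (1 : MvPolynomial (Fin 3) k) := by simp [jac, pderiv_X]
  rw [hj] at h12
  have heC : e (3 * C c) = 3 * C c := by
    simp [← MvPolynomial.algebraMap_eq, map_ofNat]
  have h12' : e (X 0) ^ 2 = X 0 ^ 2 * jac (e (X 1)) (e (X 2)) := by
    apply mul_left_cancel₀ hC
    rw [map_mul, map_mul, heC] at h12
    simpa [mul_assoc] using h12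
  have hy : piH (e (X 0)) = 0 := by
    have := congrArg piH h12'
    simpa using this
  obtain ⟨z, hz⟩ := X0_dvd hy
  have hz0 : piH z = 0 := by
    have h1 := hφe (X 0)
    rw [hz, map_mul, hφl] at h1
    have h2 : C ξ * φ z = z := by
      apply mul_left_cancel₀ hX
      rw [← h1]; ring
    have h3 := congrArg piH h2
    have h4 : piH (φ z) = piH z := by
      have := dvd_sub_hom (X 0) φ (AlgHom.id k _) (by intro i; simp [hφX]) z
      obtain ⟨t, ht⟩ := this
      have := congrArg piH ht
      simpa [sub_eq_zero] using this
    rw [map_mul, h4, piH_C] at h3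
    have h5 : C (ξ - 1) * piH z = 0 := by
      rw [C_sub, sub_mul, h3]; simp
    rcases mul_eq_zero.1 h5 with h6 | h6
    · simp [sub_eq_zero, C_ne_one hξ] at h6
    · exact h6
  obtain ⟨w, hw⟩ := X0_dvd hz0
  have hjac : jac (e (X 1)) (e (X 2)) = X 0 * (X 0 * w ^ 2) := by
    apply mul_left_cancel₀ (pow_ne_zero 2 hX)
    rw [← h12', hz, hw]; ring
  refine planeDim' h (by rw [hy, zero_jac]) ?_ (by rw [hy, zero_jac])
  have := congrArg piH hjac
  simpa [jac, pd1_piH, pd2_piH] using this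

/-- Double plane -/
lemma end_double [CharZero k] (c : k) (hc : c ≠ 0)
    (e : MvPolynomial (Fin 3) k →ₐ[k] MvPolynomial (Fin 3) k)
    (hr : Refl (C c * (X 0 ^ 2 * X 1)) e (X 0)) : False := by
  obtain ⟨φ, -, hφ, d, ξ, hξ, hξ0, hφX, hφl⟩ := hr
  have hb : br (C c * (X 0 ^ 2 * X 1)) (X 2) (X 0) = C c * X 0 ^ 2 := by
    simp [br, jacBracket, pderiv_X, Derivation.leibniz_pow]
  have hb2 : br (C c * (X 0 ^ 2 * X 1)) (X 2 + C (d 2) * X 0) (C ξ * X 0) =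
      C ξ * (C c * X 0 ^ 2) := by
    simp [br, jacBracket, pderiv_X, Derivation.leibniz_pow]
  have h1 := hφ (X 2) (X 0)
  rw [hb, hφX 2, hφl, hb2, map_mul, map_pow, hφl] at h1
  have heC : φ (C c) = C c := by simp [← MvPolynomial.algebraMap_eq]
  rw [heC] at h1
  have h2 : C (c * ξ * (ξ - 1)) * X 0 ^ 2 = (0 : MvPolynomial (Fin 3) k) := by
    simp only [C_mul, C_sub, C_1]
    linear_combination h1
  simp [hc, hξ0, sub_eq_zero, C_ne_one hξ] at h2

end Endgame


section Endgame2
variable {k : Type*} [Field k]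

lemma algHom_C' (e : MvPolynomial (Fin 3) k →ₐ[k] MvPolynomial (Fin 3) k) (c : k) :
    e (C c) = C c := by simp [← MvPolynomial.algebraMap_eq]

lemma jac_pow (f u : MvPolynomial (Fin 3) k) (M : ℕ) : jac f (X 1 ^ (M + 1) * u) =
    X 1 ^ M * (X 1 * pderiv 1 f * pderiv 2 u - pderiv 2 f * (((M : MvPolynomial (Fin 3) k) + 1) * u + X 1 * pderiv 1 u)) := by
  simp [jac, Derivation.leibniz_pow, pderiv_X]
  ring

lemma three_core [CharZero k] (c ε : k) (hc : c ≠ 0) (hε : ε = 1 ∨ ε = -1) (ξ : k) (hξ : ξ ≠ 1)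
    (φ : MvPolynomial (Fin 3) k →ₐ[k] MvPolynomial (Fin 3) k) (h0 : φ (X 0) = X 0)
    (h1 : φ (X 1) = X 1) (h2 : φ (X 2) = C ξ * X 2) (f g : MvPolynomial (Fin 3) k)
    (hf : φ f = f) (hg : rhoL g = 0) (hg' : piH g ≠ 0)
    (hb : br (C c * (X 0 * X 1 * X 2)) f g = C (ε * c) * (f * g)) : rhoL f = 0 := by
  have hbr : piH (br (C c * (X 0 * X 1 * X 2)) f g) =
      C c * X 1 * X 2 * jac (piH f) (piH g) := by
    simp [br, jacBracket, jac, pderiv_X, pd1_piH, pd2_piH]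
    ring
  rw [hb] at hbr
  obtain ⟨N, u, hN, hu, hru⟩ := X1_fac (piH_piH g) hg'
  have hN0 : N ≠ 0 := by
    rintro rfl
    rw [pow_zero, one_mul] at hN
    rw [← hN, rhoL_piH] at hru
    exact hru hg
  obtain ⟨M, rfl⟩ := Nat.exists_eq_succ_of_ne_zero hN0
  simp only [map_mul, piH_C] at hbr
  rw [hN, Nat.succ_eq_add_one, jac_pow] at hbr
  have hcan : C ε * piH f * u = X 2 * (X 1 * pderiv 1 (piH f) * pderiv 2 u -
      pderiv 2 (piH f) * (((M : MvPolynomial (Fin 3) k) + 1) * u + X 1 * pderiv 1 u)) := by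
    have hne : C c * X 1 ^ (M + 1) ≠ (0 : MvPolynomial (Fin 3) k) := by
      simp [hc]
    apply mul_left_cancel₀ hne
    linear_combination hbr
  have hr := congrArg rhoL hcan
  simp only [map_mul, map_sub, map_add, rhoL_X1, rhoL_X2, pd2_piH, rhoL_piH, zero_mul,
    zero_sub, add_zero, map_natCast, map_one, ← rhoL_deriv, rhoL_C] at hr
  have hr2 : Polynomial.C ε * rhoL f =
      - (Polynomial.X * Polynomial.derivative (rhoL f) * ((M : Polynomial k) + 1)) := by
    apply mul_right_cancel₀ hru
    linear_combination hr
  have hinv : (rhoL f).comp (Polynomial.C ξ * Polynomial.X) = rhoL f := by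
    have : (rhoL (k := k)).comp φ =
        (Polynomial.aeval (Polynomial.C ξ * Polynomial.X)).comp rhoL := by
      ext i : 1
      fin_cases i <;> simp [h0, h1, h2]
    have h3 := DFunLike.congr_fun this f
    simp only [AlgHom.comp_apply, hf] at h3
    exact h3.symm
  ext d
  have hd1 := congrArg (fun p => Polynomial.coeff p d) hr2
  have hd2 := congrArg (fun p => Polynomial.coeff p d) hinv
  simp only [Polynomial.comp_C_mul_X_coeff] at hd2
  rw [Polynomial.coeff_zero]
  by_contra hne
  have hX : (Polynomial.X * Polynomial.derivative (rhoL f)).coeff d = d * (rhoL f).coeff d := by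
    cases d with
    | zero => simp
    | succ n => rw [Polynomial.coeff_X_mul, Polynomial.coeff_derivative]; push_cast; ring
  have hM : ((M : Polynomial k) + 1) = Polynomial.C ((M : k) + 1) := by simp
  simp only [hM, Polynomial.coeff_neg, Polynomial.coeff_mul_C, Polynomial.coeff_C_mul, hX] at hd1
  have h5 : ε = - ((d * (M + 1) : ℕ) : k) := by
    apply mul_right_cancel₀ hne
    push_cast
    linear_combination hd1
  have h6 : d * (M + 1) = 1 := by
    rcases hε with rfl | rfl
    · exfalso
      have : ((1 + d * (M + 1) : ℕ) : k) = 0 := by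
        push_cast at h5 ⊢; linear_combination h5
      rw [Nat.cast_eq_zero] at this
      omega
    · have h7 : ((d * (M + 1) : ℕ) : k) = ((1 : ℕ) : k) := by
        push_cast at h5 ⊢; linear_combination h5
      exact_mod_cast h7
  have hd : d = 1 := Nat.eq_one_of_mul_eq_one_right h6
  subst hd
  apply hξ
  apply mul_left_cancel₀ hne
  simpa using hd2

/-- Three independent planes -/
lemma end_three [CharZero k] (c : k) (hc : c ≠ 0)
    (e : MvPolynomial (Fin 3) k →ₐ[k] MvPolynomial (Fin 3) k)
    (h : Good (C c * (X 0 * X 1 * X 2)) e) (hr : Refl (C c * (X 0 * X 1 * X 2)) e (X 2)) :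
    False := by
  obtain ⟨φ, hφe, hφ, d, ξ, hξ, hξ0, hφX, hφl⟩ := hr
  have hb01 : br (C c * (X 0 * X 1 * X 2)) (X 0) (X 1) = C c * (X 0 * X 1) := by
    simp [br, jacBracket, pderiv_X]
  have hb12 : br (C c * (X 0 * X 1 * X 2)) (X 1) (X 2) = C c * (X 1 * X 2) := by
    simp [br, jacBracket, pderiv_X]; try ring_nf
    try tauto
  have hb02 : br (C c * (X 0 * X 1 * X 2)) (X 0) (X 2) = -C c * (X 0 * X 2) := by
    simp [br, jacBracket, pderiv_X]; try ring_nf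
    try tauto
  have hd : d 0 = 0 ∧ d 1 = 0 := by
    have h1 := hφ (X 0) (X 1)
    have h2 : br (C c * (X 0 * X 1 * X 2)) (X 0 + C (d 0) * X 2) (X 1 + C (d 1) * X 2) =
       C c * (X 0 * X 1) - C (c * d 1) * (X 0 * X 2) - C (c * d 0) * (X 1 * X 2) := by
      simp [br, jacBracket, pderiv_X]; ring
    rw [hb01, hφX 0, hφX 1, h2, map_mul, map_mul, algHom_C', hφX 0, hφX 1] at h1
    have e1 := congrArg (aeval ![(1 : k), 0, 1]) h1
    have e2 := congrArg (aeval ![(1 : k), 0, -1]) h1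
    have e3 := congrArg (aeval ![(0 : k), 1, 1]) h1
    have e4 := congrArg (aeval ![(0 : k), 1, -1]) h1
    simp at e1 e2 e3 e4
    constructor
    · have : c * (4 * d 0) = 0 := by linear_combination e3 - e4
      simpa [hc] using this
    · have : c * (4 * d 1) = 0 := by linear_combination e1 - e2
      simpa [hc] using this
  have hφ0 : φ (X 0) = X 0 := by simp [hφX, hd.1]
  have hφ1 : φ (X 1) = X 1 := by simp [hφX, hd.2]
  have E01 := h.1 (X 0) (X 1)
  have E12 := h.1 (X 1) (X 2)
  have E02 := h.1 (X 0) (X 2)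
  have hbsymm : ∀ f g, br (C c * (X 0 * X 1 * X 2)) f g = - br (C c * (X 0 * X 1 * X 2)) g f := by
    intro f g
    simp only [br, jacBracket]; ring
  rw [hb01] at E01
  rw [hb12] at E12
  rw [hb02] at E02
  simp only [map_mul, map_neg, algHom_C'] at E01 E12 E02
  have hrho : ∀ f g, rhoL (br (C c * (X 0 * X 1 * X 2)) f g) = 0 := by
    intro f g
    simp [br, jacBracket, pderiv_X]
  have Z01 := hrho (e (X 0)) (e (X 1))
  have Z12 := hrho (e (X 1)) (e (X 2))
  have Z02 := hrho (e (X 0)) (e (X 2))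
  rw [← E01] at Z01
  rw [← E12] at Z12
  rw [← E02] at Z02
  have core : ∀ i j, (∃ ε : k, (ε = 1 ∨ ε = -1) ∧ br (C c * (X 0 * X 1 * X 2)) (e (X i)) (e (X j)) =
      C (ε * c) * (e (X i) * e (X j))) → rhoL (e (X i)) ≠ 0 → rhoL (e (X j)) = 0 →
      piH (e (X j)) = 0 := by
    rintro i j ⟨ε, hε, hb⟩ hi hj
    by_contra hne
    exact hi (three_core c ε hc hε ξ hξ φ hφ0 hφ1 hφl _ _ (hφe _) hj hne hb)
  simp only [map_mul, map_neg, rhoL_C, mul_eq_zero, neg_eq_zero, Polynomial.C_eq_zero, hc,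
    false_or] at Z01 Z12 Z02
  by_cases z0 : rhoL (e (X 0)) = 0
  · by_cases z1 : rhoL (e (X 1)) = 0
    · by_cases z2 : rhoL (e (X 2)) = 0
      · refine lineDim h ?_
        intro i
        have : rhoL (e (X i)) = 0 := by
          match i with
          | 0 => exact z0
          | 1 => exact z1
          | 2 => exact z2
        rw [this]; simp
      · have p0 := core 2 0 ⟨1, Or.inl rfl, by rw [hbsymm, ← E02, one_mul]; ring⟩ z2 z0
        have p1 := core 2 1 ⟨-1, Or.inr rfl, by
          rw [hbsymm, ← E12, C_mul, C_neg, C_1]; ring⟩ z2 z1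
        exact planeDim' h (by rw [p0, zero_jac]) (by rw [p1, zero_jac]) (by rw [p0, zero_jac])
    · have z2 : rhoL (e (X 2)) = 0 := Z12.resolve_left z1
      have p0 := core 1 0 ⟨-1, Or.inr rfl, by
          rw [hbsymm, ← E01, C_mul, C_neg, C_1]; ring⟩ z1 z0
      have p2 := core 1 2 ⟨1, Or.inl rfl, by rw [← E12, one_mul]⟩ z1 z2
      exact planeDim' h (by rw [p0, zero_jac]) (by rw [p2, jac_zero]) (by rw [p0, zero_jac])
  · have z1 : rhoL (e (X 1)) = 0 := Z01.resolve_left z0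
    have z2 : rhoL (e (X 2)) = 0 := Z02.resolve_left z0
    have p1 := core 0 1 ⟨1, Or.inl rfl, by rw [← E01, one_mul]⟩ z0 z1
    have p2 := core 0 2 ⟨-1, Or.inr rfl, by
          rw [← E02, C_mul, C_neg, C_1]; ring⟩ z0 z2
    exact planeDim' h (by rw [p1, jac_zero]) (by rw [p1, zero_jac]) (by rw [p2, jac_zero])

end Endgame2


section Endgame3
variable {k : Type*} [Field k]

lemma conc_core [CharZero k] (ε : k) (hε : ε ≠ 0) (f g z u v : MvPolynomial (Fin 3) k) (M : ℕ)
    (hf : f = X 1 ^ (M + 2) * u) (hg : g = X 1 ^ (M + 2) * v) (hu : rhoL u ≠ 0)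
    (h : f * (f + 2 * g) = C ε * X 1 ^ 2 * jac z f) : Polynomial.derivative (rhoL z) = 0 := by
  have hf' : f = X 1 ^ ((M + 1) + 1) * u := hf
  have hj := jac_pow z u (M + 1)
  rw [← hf'] at hj
  rw [hj] at h
  have hc : X 1 ^ (M + 1) * (u * (u + 2 * v)) = C ε * (X 1 * pderiv 1 z * pderiv 2 u -
      pderiv 2 z * ((((M + 1 : ℕ) : MvPolynomial (Fin 3) k) + 1) * u + X 1 * pderiv 1 u)) := by
    have hne : X 1 ^ (M + 3) ≠ (0 : MvPolynomial (Fin 3) k) := pow_ne_zero _ (X_ne_zero 1)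
    apply mul_left_cancel₀ hne
    rw [hf, hg] at h
    linear_combination h
  have hr := congrArg rhoL hc
  simp only [map_mul, map_sub, map_add, rhoL_X1, map_pow, zero_mul, zero_sub, add_zero,
    map_natCast, map_one, ← rhoL_deriv, rhoL_C, ne_eq, Nat.add_eq_zero_iff, one_ne_zero, and_false,
    not_false_eq_true, zero_pow] at hr
  have hr' := hr.symm
  have hM : (((M + 1 : ℕ) : Polynomial k) + 1) ≠ 0 := by exact_mod_cast Nat.succ_ne_zero (M + 1)
  simp only [neg_eq_zero, mul_eq_zero, hu, hM, Polynomial.C_eq_zero, hε, or_false, false_or] at hr'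
  exact hr'

lemma conc_dvd (y : MvPolynomial (Fin 3) k) (h0 : rhoL y = 0) (h1 : rhoL (pderiv 1 y) = 0)
    (hy : piH y ≠ 0) : ∃ M u, piH y = X 1 ^ (M + 2) * u ∧ rhoL u ≠ 0 := by
  obtain ⟨N, u, hN, hu, hru⟩ := X1_fac (piH_piH y) hy
  match N, hN with
  | 0, hN =>
    rw [pow_zero, one_mul] at hN
    rw [← hN, rhoL_piH] at hru
    exact absurd h0 hru
  | 1, hN =>
    have := congrArg (fun f => rhoL (pderiv 1 f)) hN
    simp [pd1_piH, h1] at this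
    exact absurd this.symm hru
  | M + 2, hN => exact ⟨M, u, hN, hru⟩

/-- Three concurrent planes -/
lemma end_conc [CharZero k] (c : k) (hc : c ≠ 0)
    (e : MvPolynomial (Fin 3) k →ₐ[k] MvPolynomial (Fin 3) k)
    (h : Good (C c * (X 0 * X 1 * (X 0 + X 1))) e)
    (hr0 : Refl (C c * (X 0 * X 1 * (X 0 + X 1))) e (X 0))
    (hr1 : Refl (C c * (X 0 * X 1 * (X 0 + X 1))) e (X 1)) :
    False := by
  have hbr : ∀ f g, br (C c * (X 0 * X 1 * (X 0 + X 1))) f g =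
      C c * ((X 1 * (2 * X 0 + X 1)) * (pderiv 1 f * pderiv 2 g - pderiv 2 f * pderiv 1 g) +
        X 0 * (X 0 + 2 * X 1) * (pderiv 2 f * pderiv 0 g - pderiv 0 f * pderiv 2 g)) := by
    intro f g
    simp only [br, jacBracket, Derivation.leibniz, pderiv_C, map_add, smul_eq_mul, pderiv_X]
    simp
    ring
  have hCc : (C c : MvPolynomial (Fin 3) k) ≠ 0 := by simpa using hc
  obtain ⟨φ, hφe, hφ, d, ξ, hξ, hξ0, hφX, hφl⟩ := hr0
  obtain ⟨ψ, hψe, hψ, d', ξ', hξ', hξ0', hψX, hψl⟩ := hr1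
  have a1 : d 1 = 1 ∧ ξ = -1 := by
    have h1 := hφ (X 2) (X 0)
    have h2 := hφ (X 1) (X 2)
    rw [hbr, hbr] at h1 h2
    rw [hφX 2, hφl] at h1
    rw [hφX 1, hφX 2] at h2
    simp [pderiv_X, hc, map_ofNat] at h1 h2
    rw [hφX 1, hφl] at h1 h2
    have e1 := congrArg (aeval ![(1 : k), 0, 0]) h1
    have e2 := congrArg (aeval ![(1 : k), 0, 0]) h2
    simp [map_ofNat] at e1 e2
    have e1' : ξ + 2 * d 1 = 1 := by
      apply mul_left_cancel₀ hξ0; linear_combination e1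
    have hd0 : d 1 ≠ 0 := by
      intro h0; rw [h0] at e1'; apply hξ; simpa using e1'
    have e2' : 2 * ξ + d 1 = -1 := by
      apply mul_left_cancel₀ hd0; linear_combination e2
    have e3 : (3 : k) * d 1 = 3 * 1 := by linear_combination 2 * e1' - e2'
    have e4 : d 1 = 1 := mul_left_cancel₀ (by norm_num) e3
    exact ⟨e4, by linear_combination e1' - 2 * e4⟩
  have a2 : d' 0 = 1 ∧ ξ' = -1 := by
    have h1 := hψ (X 1) (X 2)
    have h2 := hψ (X 2) (X 0)
    rw [hbr, hbr] at h1 h2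
    rw [hψX 2, hψl] at h1
    rw [hψX 0, hψX 2] at h2
    simp [pderiv_X, hc, map_ofNat] at h1 h2
    rw [hψX 0, hψl] at h1 h2
    have e1 := congrArg (aeval ![(0 : k), 1, 0]) h1
    have e2 := congrArg (aeval ![(0 : k), 1, 0]) h2
    simp [map_ofNat] at e1 e2
    have e1' : ξ' + 2 * d' 0 = 1 := by
      apply mul_left_cancel₀ hξ0'; linear_combination e1
    have hd0 : d' 0 ≠ 0 := by
      intro h0; rw [h0] at e1'; apply hξ'; simpa using e1'
    have e2' : 2 * ξ' + d' 0 = -1 := by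
      apply mul_left_cancel₀ hd0; linear_combination e2
    have e3 : (3 : k) * d' 0 = 3 * 1 := by linear_combination 2 * e1' - e2'
    have e4 : d' 0 = 1 := mul_left_cancel₀ (by norm_num) e3
    exact ⟨e4, by linear_combination e1' - 2 * e4⟩
  obtain ⟨hd, rfl⟩ := a1
  obtain ⟨hd', rfl⟩ := a2
  have rφ : ∀ f, rhoL (φ f) = rhoL f := by
    intro f
    have : (rhoL : MvPolynomial (Fin 3) k →ₐ[k] _).comp φ = rhoL := by
      ext i : 1
      simp [hφX]
    exact DFunLike.congr_fun this f
  have rψ : ∀ f, rhoL (ψ f) = rhoL f := by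
    intro f
    have : (rhoL : MvPolynomial (Fin 3) k →ₐ[k] _).comp ψ = rhoL := by
      ext i : 1
      simp [hψX]
    exact DFunLike.congr_fun this f
  have E01 := h.1 (X 0) (X 1)
  have E12 := h.1 (X 1) (X 2)
  have E20 := h.1 (X 2) (X 0)
  rw [hbr (X _) (X _)] at E01 E12 E20
  have B : ∀ f g, piH (br (C c * (X 0 * X 1 * (X 0 + X 1))) f g) =
      C c * (X 1 ^ 2 * jac (piH f) (piH g)) := by
    intro f g
    rw [hbr]
    simp [jac, pd1_piH, pd2_piH]
    left; ring_nf; tauto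
  have B' : ∀ f g, rhoL (br (C c * (X 0 * X 1 * (X 0 + X 1))) f g) = 0 := by
    intro f g
    rw [hbr]
    simp
  have Z12 := B' (e (X 1)) (e (X 2))
  have Z20 := B' (e (X 2)) (e (X 0))
  have H01 := B (e (X 0)) (e (X 1))
  have H12 := B (e (X 1)) (e (X 2))
  have H20 := B (e (X 2)) (e (X 0))
  rw [← E12] at Z12 H12
  rw [← E20] at Z20 H20
  rw [← E01] at H01
  simp [pderiv_X, hc, map_ofNat] at Z12 Z20 H01 H12 H20
  have r01 : rhoL (e (X 0)) = 0 ∧ rhoL (e (X 1)) = 0 := by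
    rcases Z12 with z | z
    · refine ⟨?_, z⟩
      rcases Z20 with z' | z'
      · exact z'
      · simpa [z] using z'
    · rcases Z20 with z' | z'
      · exact ⟨z', by simpa [z'] using z⟩
      · have h3 : 3 * rhoL (e (X 0)) = 0 := by linear_combination 2 * z - z'
        have h4 : 3 * rhoL (e (X 1)) = 0 := by linear_combination 2 * z' - z
        simpa using And.intro h3 h4
  have key : ∀ i, rhoL (e (X i)) = 0 → rhoL (pderiv 1 (e (X i))) = 0 := by
    intro i hi
    have hC : rhoL (pderiv 2 (e (X i))) = 0 := by rw [← rhoL_deriv, hi]; simp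
    have h1 := congrArg rhoL (chain_rule φ 0 (e (X i)))
    have h2 := congrArg rhoL (chain_rule ψ 1 (e (X i)))
    rw [hφe] at h1
    rw [hψe] at h2
    simp only [Fin.sum_univ_three, map_add, map_mul, rφ, rψ, hC, zero_mul, add_zero] at h1 h2
    rw [hφl, hφX 1, hd] at h1
    rw [hψl, hψX 0, hd'] at h2
    simp [pderiv_X] at h1 h2
    have h3 : 3 * rhoL (pderiv 1 (e (X i))) = 0 := by
      linear_combination 2 * h2 + h1
    simpa using h3
  have K0 : piH (e (X 0)) * (piH (e (X 0)) + 2 * piH (e (X 1))) =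
      C 1 * X 1 ^ 2 * jac (piH (e (X 2))) (piH (e (X 0))) := by
    rw [H20, C_1]; ring
  have K1 : piH (e (X 1)) * (piH (e (X 1)) + 2 * piH (e (X 0))) =
      C (-1) * X 1 ^ 2 * jac (piH (e (X 2))) (piH (e (X 1))) := by
    rw [C_neg, C_1, jac_symm]; linear_combination H12
  have fin : Polynomial.derivative (rhoL (e (X 2))) = 0 → False := by
    intro h2
    refine lineDim h ?_
    intro i
    match i with
    | 0 => rw [r01.1]; simp
    | 1 => rw [r01.2]; simp
    | 2 => exact h2
  by_cases p0 : piH (e (X 0)) = 0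
  · by_cases p1 : piH (e (X 1)) = 0
    · exact planeDim' h (by rw [p0, zero_jac]) (by rw [p1, zero_jac]) (by rw [p0, zero_jac])
    · obtain ⟨M, u, hM, hu⟩ := conc_dvd _ r01.2 (key 1 r01.2) p1
      refine fin ?_
      have := conc_core (-1) (by simp) _ (piH (e (X 0))) _ u 0 M hM (by rw [p0]; simp) hu K1
      rwa [rhoL_piH] at this
  · obtain ⟨M, u, hM, hu⟩ := conc_dvd _ r01.1 (key 0 r01.1) p0
    by_cases p1 : piH (e (X 1)) = 0
    · refine fin ?_
      have := conc_core 1 (by simp) _ (piH (e (X 1))) _ u 0 M hM (by rw [p1]; simp) hu K0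
      rwa [rhoL_piH] at this
    · obtain ⟨M', u', hM', hu'⟩ := conc_dvd _ r01.2 (key 1 r01.2) p1
      refine fin ?_
      rcases le_total M M' with hle | hle
      · have := conc_core 1 (by simp) _ (piH (e (X 1))) _ u (X 1 ^ (M' - M) * u') M hM (by
          rw [hM', ← mul_assoc, ← pow_add]; congr 2; omega) hu K0
        rwa [rhoL_piH] at this
      · have := conc_core (-1) (by simp) _ (piH (e (X 0))) _ u' (X 1 ^ (M - M') * u) M' hM' (by
          rw [hM, ← mul_assoc, ← pow_add]; congr 2; omega) hu' K1
        rwa [rhoL_piH] at this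

end Endgame3


section Transport
variable {k : Type*} [Field k]

/-- linear form with given coefficients -/
noncomputable def lin (a : Fin 3 → k) : MvPolynomial (Fin 3) k := ∑ j, C (a j) * X j

lemma lin_smul (s : k) (a : Fin 3 → k) : lin (s • a) = C s * lin a := by
  simp [lin, Finset.mul_sum, mul_assoc]

lemma lin_add (a b : Fin 3 → k) : lin (a + b) = lin a + lin b := by
  simp [lin, add_mul, Finset.sum_add_distrib]

lemma aeval_lin (ψ : MvPolynomial (Fin 3) k →ₐ[k] MvPolynomial (Fin 3) k)
    (A : Matrix (Fin 3) (Fin 3) k) (h : ∀ i, ψ (X i) = lin (A i)) (b : Fin 3 → k) :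
    ψ (lin b) = lin (Matrix.vecMul b A) := by
  simp only [lin, map_sum, map_mul, h, Matrix.vecMul, dotProduct, algHom_C']
  simp only [Finset.sum_mul, Finset.mul_sum]
  rw [Finset.sum_comm]
  simp only [← mul_assoc]

lemma lin_single (i : Fin 3) : lin (Pi.single i (1 : k)) = X i := by
  simp only [lin]
  rw [Finset.sum_eq_single i]
  · simp
  · intro b _ hb; simp [hb]
  · simp

lemma exists_equiv (A : Matrix (Fin 3) (Fin 3) k) (hA : A.det ≠ 0) :
    ∃ ψ : MvPolynomial (Fin 3) k ≃ₐ[k] MvPolynomial (Fin 3) k, ∀ i, ψ (X i) = lin (A i) := by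
  have hu : IsUnit A.det := isUnit_iff_ne_zero.2 hA
  have key : ∀ A B : Matrix (Fin 3) (Fin 3) k, A * B = 1 →
      (aeval (fun i => lin (B i)) : MvPolynomial (Fin 3) k →ₐ[k] MvPolynomial (Fin 3) k).comp
        (aeval (fun i => lin (A i))) = AlgHom.id k _ := by
    intro A B hAB
    ext i : 1
    simp only [AlgHom.comp_apply, aeval_X, AlgHom.id_apply]
    rw [aeval_lin _ B (fun i => by simp), ← lin_single]
    congr 1
    have : Matrix.vecMul (A i) B = (A * B) i := rfl
    rw [this, hAB]
    ext j
    simp [Matrix.one_apply, Pi.single_apply, eq_comm]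
  refine ⟨AlgEquiv.ofAlgHom (aeval (fun i => lin (A i))) (aeval (fun i => lin (A⁻¹ i)))
    (key _ _ (Matrix.nonsing_inv_mul A hu)) (key _ _ (Matrix.mul_nonsing_inv A hu)), fun i => ?_⟩
  simp

lemma br_transport (A : Matrix (Fin 3) (Fin 3) k)
    (ψ : MvPolynomial (Fin 3) k →ₐ[k] MvPolynomial (Fin 3) k) (h : ∀ i, ψ (X i) = lin (A i))
    (Ω f g : MvPolynomial (Fin 3) k) :
    br (ψ Ω) (ψ f) (ψ g) = C A.det * ψ (br Ω f g) := by
  have hd : ∀ i j, pderiv j (ψ (X i)) = C (A i j) := by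
    intro i j
    rw [h, lin, map_sum, Finset.sum_eq_single j]
    · simp
    · intro b _ hb; simp [pderiv_X, hb]
    · simp
  have hc : ∀ j p, pderiv j (ψ p) = ψ (pderiv 0 p) * C (A 0 j) + ψ (pderiv 1 p) * C (A 1 j) +
      ψ (pderiv 2 p) * C (A 2 j) := by
    intro j p
    rw [chain_rule, Fin.sum_univ_three, hd, hd, hd]
  simp only [br, jacBracket, hc, Matrix.det_fin_three, map_add, map_sub, map_mul]
  ring

/-- conjugate -/
noncomputable def conj (ψ : MvPolynomial (Fin 3) k ≃ₐ[k] MvPolynomial (Fin 3) k)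
    (e : MvPolynomial (Fin 3) k →ₐ[k] MvPolynomial (Fin 3) k) :
    MvPolynomial (Fin 3) k →ₐ[k] MvPolynomial (Fin 3) k :=
  (ψ.symm : MvPolynomial (Fin 3) k →ₐ[k] MvPolynomial (Fin 3) k).comp (e.comp ψ)

lemma conj_apply (ψ : MvPolynomial (Fin 3) k ≃ₐ[k] MvPolynomial (Fin 3) k)
    (e : MvPolynomial (Fin 3) k →ₐ[k] MvPolynomial (Fin 3) k) (f) :
    conj ψ e f = ψ.symm (e (ψ f)) := rfl

lemma conj_poisson (A : Matrix (Fin 3) (Fin 3) k) (hA : A.det ≠ 0)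
    (ψ : MvPolynomial (Fin 3) k ≃ₐ[k] MvPolynomial (Fin 3) k) (h : ∀ i, ψ (X i) = lin (A i))
    (Ω : MvPolynomial (Fin 3) k)
    (e : MvPolynomial (Fin 3) k →ₐ[k] MvPolynomial (Fin 3) k)
    (he : ∀ f g, e (br (ψ Ω) f g) = br (ψ Ω) (e f) (e g)) (f g : MvPolynomial (Fin 3) k) :
    conj ψ e (br Ω f g) = br Ω (conj ψ e f) (conj ψ e g) := by
  have hb := br_transport A (ψ : MvPolynomial (Fin 3) k →ₐ[k] MvPolynomial (Fin 3) k) h Ω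
  change ∀ f g, br (ψ Ω) (ψ f) (ψ g) = C A.det * ψ (br Ω f g) at hb
  apply ψ.injective
  have hC : (C A.det : MvPolynomial (Fin 3) k) ≠ 0 := by simpa using hA
  apply mul_left_cancel₀ hC
  rw [← hb, conj_apply, conj_apply, conj_apply, ψ.apply_symm_apply, ψ.apply_symm_apply,
    ψ.apply_symm_apply, ← he, hb, map_mul, algHom_C']

lemma Good.transport (A : Matrix (Fin 3) (Fin 3) k) (hA : A.det ≠ 0)
    (ψ : MvPolynomial (Fin 3) k ≃ₐ[k] MvPolynomial (Fin 3) k) (h : ∀ i, ψ (X i) = lin (A i))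
    (Ω : MvPolynomial (Fin 3) k)
    (e : MvPolynomial (Fin 3) k →ₐ[k] MvPolynomial (Fin 3) k)
    (he : Good (ψ Ω) e) : Good Ω (conj ψ e) := by
  refine ⟨conj_poisson A hA ψ h Ω e he.1, fun f => ?_⟩
  obtain ⟨p, hp, hr⟩ := he.2 (ψ f)
  refine ⟨p.map (ψ.symm : MvPolynomial (Fin 3) k →+* MvPolynomial (Fin 3) k), hp.map _, ?_⟩
  rw [Polynomial.eval₂_map]
  have h2 := congrArg (ψ.symm : MvPolynomial (Fin 3) k →+* MvPolynomial (Fin 3) k) hr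
  rw [Polynomial.hom_eval₂, map_zero] at h2
  rw [← h2]
  congr 1
  · ext i <;> simp [conj_apply]
  · simp

lemma Refl.transport (A : Matrix (Fin 3) (Fin 3) k) (hA : A.det ≠ 0)
    (ψ : MvPolynomial (Fin 3) k ≃ₐ[k] MvPolynomial (Fin 3) k) (h : ∀ i, ψ (X i) = lin (A i))
    (Ω : MvPolynomial (Fin 3) k)
    (e : MvPolynomial (Fin 3) k →ₐ[k] MvPolynomial (Fin 3) k) (l : MvPolynomial (Fin 3) k)
    (he : Refl (ψ Ω) e (ψ l)) : Refl Ω (conj ψ e) l := by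
  obtain ⟨φ, hφe, hφ, d, ξ, hξ, hξ0, hφX, hφl⟩ := he
  refine ⟨conj ψ φ, ?_, conj_poisson A hA ψ h Ω φ hφ, A.mulVec d, ξ, hξ, hξ0, ?_, ?_⟩
  · intro f
    simp [conj_apply, hφe]
  · intro i
    apply ψ.injective
    rw [conj_apply, ψ.apply_symm_apply, map_add, map_mul, h, lin]
    simp only [map_sum, map_mul, hφX, algHom_C']
    have : ψ (C ((A.mulVec d) i)) = C ((A.mulVec d) i) :=
      algHom_C' (ψ : MvPolynomial (Fin 3) k →ₐ[k] MvPolynomial (Fin 3) k) _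
    rw [this]
    simp only [Matrix.mulVec, dotProduct, map_sum, map_mul, Finset.sum_mul, mul_add,
      Finset.sum_add_distrib, mul_assoc]
  · apply ψ.injective
    have : ψ (C ξ) = C ξ :=
      algHom_C' (ψ : MvPolynomial (Fin 3) k →ₐ[k] MvPolynomial (Fin 3) k) _
    rw [conj_apply, ψ.apply_symm_apply, hφl, map_mul, this]

lemma Refl.scale {Ω : MvPolynomial (Fin 3) k}
    {e : MvPolynomial (Fin 3) k →ₐ[k] MvPolynomial (Fin 3) k} {l : MvPolynomial (Fin 3) k}
    (he : Refl Ω e l) (s : k) (hs : s ≠ 0) : Refl Ω e (C s * l) := by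
  obtain ⟨φ, hφe, hφ, d, ξ, hξ, hξ0, hφX, hφl⟩ := he
  refine ⟨φ, hφe, hφ, fun i => d i * s⁻¹, ξ, hξ, hξ0, ?_, ?_⟩
  · intro i
    rw [hφX, ← mul_assoc, ← C_mul, mul_assoc, inv_mul_cancel₀ hs, mul_one]
  · rw [map_mul, algHom_C', hφl]; ring

lemma transport (A : Matrix (Fin 3) (Fin 3) k) (hA : A.det ≠ 0) (Ω : MvPolynomial (Fin 3) k)
    (e : MvPolynomial (Fin 3) k →ₐ[k] MvPolynomial (Fin 3) k) (he : Good Ω e) :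
    ∃ (ψ : MvPolynomial (Fin 3) k ≃ₐ[k] MvPolynomial (Fin 3) k)
      (e' : MvPolynomial (Fin 3) k →ₐ[k] MvPolynomial (Fin 3) k),
      (∀ i, ψ (X i) = lin (A i)) ∧ (∀ s, ψ (C s) = C s) ∧ ∀ Ω', ψ Ω' = Ω → Good Ω' e' ∧
        ∀ l l', ψ l' = l → Refl Ω e l → Refl Ω' e' l' := by
  obtain ⟨ψ, hψ⟩ := exists_equiv A hA
  refine ⟨ψ, conj ψ e, hψ, fun s => algHom_C'
    (ψ : MvPolynomial (Fin 3) k →ₐ[k] MvPolynomial (Fin 3) k) s, ?_⟩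
  rintro Ω' rfl
  refine ⟨he.transport A hA ψ hψ, ?_⟩
  rintro l l' rfl hr
  exact hr.transport A hA ψ hψ

lemma complete1 (a : Fin 3 → k) (ha : a ≠ 0) :
    ∃ b c : Fin 3 → k, Matrix.det (Matrix.of ![a, b, c]) ≠ 0 := by
  by_contra hcon
  push Not at hcon
  apply ha
  have h1 := hcon ![0, 1, 0] ![0, 0, 1]
  have h2 := hcon ![1, 0, 0] ![0, 0, 1]
  have h3 := hcon ![1, 0, 0] ![0, 1, 0]
  simp [Matrix.det_fin_three] at h1 h2 h3
  ext i
  fin_cases i <;> simp [h1, h2, h3]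

lemma complete2 (a b : Fin 3 → k) (ha : a ≠ 0) (hab : ∀ s : k, b ≠ s • a) :
    ∃ c : Fin 3 → k, Matrix.det (Matrix.of ![a, b, c]) ≠ 0 := by
  by_contra hcon
  push Not at hcon
  have h1 := hcon ![1, 0, 0]
  have h2 := hcon ![0, 1, 0]
  have h3 := hcon ![0, 0, 1]
  simp [Matrix.det_fin_three] at h1 h2 h3
  obtain ⟨i, hi⟩ := Function.ne_iff.1 ha
  apply hab (b i / a i)
  ext j
  simp only [Pi.smul_apply, smul_eq_mul]
  simp only [Pi.zero_apply] at hi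
  rw [div_mul_eq_mul_div, eq_div_iff hi]
  fin_cases i <;> fin_cases j <;> simp <;> grind

lemma span3 (a b c v : Fin 3 → k) (h : Matrix.det (Matrix.of ![a, b, c]) ≠ 0) :
    ∃ α β γ : k, v = α • a + β • b + γ • c := by
  set A := Matrix.of ![a, b, c] with hA
  have hu : IsUnit A.det := isUnit_iff_ne_zero.2 h
  refine ⟨Matrix.vecMul v A⁻¹ 0, Matrix.vecMul v A⁻¹ 1, Matrix.vecMul v A⁻¹ 2, ?_⟩
  have : Matrix.vecMul (Matrix.vecMul v A⁻¹) A = v := by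
    rw [Matrix.vecMul_vecMul, Matrix.nonsing_inv_mul A hu, Matrix.vecMul_one]
  conv_lhs => rw [← this]
  generalize Matrix.vecMul v A⁻¹ = w
  ext j
  simp [Matrix.vecMul, dotProduct, Fin.sum_univ_three, hA]

lemma end_indep [CharZero k] (c : k) (hc : c ≠ 0) (a b d : Fin 3 → k)
    (ha : a ≠ 0) (hb : b ≠ 0) (hd : d ≠ 0)
    (Ω : MvPolynomial (Fin 3) k)
    (hΩ : Ω = C c * (lin a * lin b * lin d))
    (e : MvPolynomial (Fin 3) k →ₐ[k] MvPolynomial (Fin 3) k)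
    (h : Good Ω e) (h1 : Refl Ω e (lin a)) (h2 : Refl Ω e (lin b)) (h3 : Refl Ω e (lin d))
    (hab : ∀ s : k, b ≠ s • a) : False := by
  obtain ⟨v, hv⟩ := complete2 a b ha hab
  obtain ⟨α, β, γ, hs⟩ := span3 a b v d hv
  by_cases hγ : γ = 0
  · subst hγ
    rw [zero_smul, add_zero] at hs
    have hl : lin d = C α * lin a + C β * lin b := by rw [hs, lin_add, lin_smul, lin_smul]
    by_cases hα : α = 0
    · subst hα
      have hβ : β ≠ 0 := by
        rintro rfl; simp at hs; exact hd hs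
      obtain ⟨ψ, e', hψ, hψC, H⟩ := transport (Matrix.of ![b, a, v]) (by
        rw [Matrix.det_fin_three] at hv ⊢
        simp at hv ⊢
        intro h0; apply hv; linear_combination - h0) Ω e h
      have hψ0 : ψ (X 0) = lin b := hψ 0
      have hψ1 : ψ (X 1) = lin a := hψ 1
      obtain ⟨-, H2⟩ := H (C (c * β) * (X 0 ^ 2 * X 1)) (by
        rw [hΩ, hl]; simp only [map_mul, map_pow, hψ0, hψ1, hψC, C_0]; ring)
      exact end_double _ (mul_ne_zero hc hβ) e' (H2 _ _ hψ0 h2)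
    · by_cases hβ : β = 0
      · subst hβ
        obtain ⟨ψ, e', hψ, hψC, H⟩ := transport _ hv Ω e h
        have hψ0 : ψ (X 0) = lin a := hψ 0
        have hψ1 : ψ (X 1) = lin b := hψ 1
        obtain ⟨-, H2⟩ := H (C (c * α) * (X 0 ^ 2 * X 1)) (by
          rw [hΩ, hl]; simp only [map_mul, map_pow, hψ0, hψ1, hψC, C_0]; ring)
        exact end_double _ (mul_ne_zero hc hα) e' (H2 _ _ hψ0 h1)
      · obtain ⟨ψ, e', hψ, hψC, H⟩ := transport (Matrix.of ![α • a, β • b, v]) (by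
          rw [Matrix.det_fin_three] at hv ⊢
          simp at hv ⊢
          intro h0; apply hv
          apply mul_left_cancel₀ (mul_ne_zero hα hβ)
          linear_combination h0) Ω e h
        have hψ0 : ψ (X 0) = lin (α • a) := hψ 0
        have hψ1 : ψ (X 1) = lin (β • b) := hψ 1
        rw [lin_smul] at hψ0 hψ1
        obtain ⟨H1, H2⟩ := H (C (c * α⁻¹ * β⁻¹) * (X 0 * X 1 * (X 0 + X 1))) (by
          rw [hΩ, hl]; simp only [map_mul, map_add, hψ0, hψ1, hψC]
          have i1 : C α⁻¹ * C α = (1 : MvPolynomial (Fin 3) k) := by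
            rw [← C_mul, inv_mul_cancel₀ hα, C_1]
          have i2 : C β⁻¹ * C β = (1 : MvPolynomial (Fin 3) k) := by
            rw [← C_mul, inv_mul_cancel₀ hβ, C_1]
          linear_combination (C c * (lin a * lin b * (C α * lin a + C β * lin b))) *
            (C β⁻¹ * C β * i1 + i2))
        exact end_conc _ (by simp [hc, hα, hβ]) e' H1 (H2 _ _ hψ0 (h1.scale α hα))
          (H2 _ _ hψ1 (h2.scale β hβ))
  · obtain ⟨ψ, e', hψ, hψC, H⟩ := transport (Matrix.of ![a, b, d]) (by
        rw [Matrix.det_fin_three] at hv ⊢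
        simp at hv ⊢
        intro h0; apply hv
        apply mul_left_cancel₀ hγ
        rw [hs] at h0
        simp at h0
        linear_combination h0) Ω e h
    have hψ0 : ψ (X 0) = lin a := hψ 0
    have hψ1 : ψ (X 1) = lin b := hψ 1
    have hψ2 : ψ (X 2) = lin d := hψ 2
    obtain ⟨H1, H2⟩ := H (C c * (X 0 * X 1 * X 2)) (by
      rw [hΩ, map_mul, map_mul, map_mul, hψ0, hψ1, hψ2, hψC])
    exact end_three c hc e' H1 (H2 _ _ hψ2 h3)

lemma endgame [CharZero k] (c : k) (hc : c ≠ 0) (a b d : Fin 3 → k)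
    (ha : a ≠ 0) (hb : b ≠ 0) (hd : d ≠ 0)
    (Ω : MvPolynomial (Fin 3) k)
    (hΩ : Ω = C c * (lin a * lin b * lin d))
    (e : MvPolynomial (Fin 3) k →ₐ[k] MvPolynomial (Fin 3) k)
    (h : Good Ω e) (h1 : Refl Ω e (lin a)) (h2 : Refl Ω e (lin b)) (h3 : Refl Ω e (lin d)) :
    False := by
  by_cases hab : ∀ s : k, b ≠ s • a
  · exact end_indep c hc a b d ha hb hd Ω hΩ e h h1 h2 h3 hab
  by_cases had : ∀ s : k, d ≠ s • a
  · exact end_indep c hc a d b ha hd hb Ω (by rw [hΩ]; ring) e h h1 h3 h2 had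
  push Not at hab had
  obtain ⟨s, rfl⟩ := hab
  obtain ⟨t, rfl⟩ := had
  have hs : s ≠ 0 := by rintro rfl; simp at hb
  have ht : t ≠ 0 := by rintro rfl; simp at hd
  obtain ⟨u, v, hA⟩ := complete1 a ha
  obtain ⟨ψ, e', hψ, hψC, H⟩ := transport _ hA Ω e h
  have hψ0 : ψ (X 0) = lin a := hψ 0
  obtain ⟨H1, H2⟩ := H (C (c * s * t) * X 0 ^ 3) (by
    rw [hΩ]; simp only [map_mul, map_pow, hψ0, hψC, lin_smul]; ring)
  exact end_cube _ (by simp [hc, hs, ht]) e' H1 (H2 _ _ hψ0 h1)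

end Transport


section Jacobian
variable {k : Type*} [Field k]

lemma pd_comm (i j : Fin 3) (f : MvPolynomial (Fin 3) k) :
    pderiv i (pderiv j f) = pderiv j (pderiv i f) := by
  have : ⁅(pderiv i : Derivation k (MvPolynomial (Fin 3) k) (MvPolynomial (Fin 3) k)),
      (pderiv j : Derivation k (MvPolynomial (Fin 3) k) (MvPolynomial (Fin 3) k))⁆ = 0 := by
    apply MvPolynomial.derivation_ext
    intro m
    simp [Derivation.commutator_apply, pderiv_X, Pi.single_apply]
    split_ifs <;> simp
  have h2 := DFunLike.congr_fun this f
  rw [Derivation.commutator_apply] at h2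
  exact sub_eq_zero.1 h2

/-- The Jacobian matrix -/
noncomputable def Jm (e : MvPolynomial (Fin 3) k →ₐ[k] MvPolynomial (Fin 3) k) :
    Matrix (Fin 3) (Fin 3) (MvPolynomial (Fin 3) k) :=
  Matrix.of fun i j => pderiv j (e (X i))

lemma dOmega (Ω : MvPolynomial (Fin 3) k)
    (e : MvPolynomial (Fin 3) k →ₐ[k] MvPolynomial (Fin 3) k)
    (h : ∀ f g, e (br Ω f g) = br Ω (e f) (e g)) (j : Fin 3) :
    pderiv j (e Ω) = (Jm e).det * pderiv j Ω := by
  have h01 := h (X 0) (X 1)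
  have h12 := h (X 1) (X 2)
  have h20 := h (X 2) (X 0)
  have b01 : br Ω (X 0) (X 1) = pderiv 2 Ω := by simp [br, jacBracket, pderiv_X]
  have b12 : br Ω (X 1) (X 2) = pderiv 0 Ω := by simp [br, jacBracket, pderiv_X]
  have b20 : br Ω (X 2) (X 0) = pderiv 1 Ω := by simp [br, jacBracket, pderiv_X]
  rw [b01] at h01
  rw [b12] at h12
  rw [b20] at h20
  rw [chain_rule, Fin.sum_univ_three, h01, h12, h20]
  simp only [br, jacBracket, Matrix.det_fin_three, Jm, Matrix.of_apply]
  match j with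
  | 0 => ring
  | 1 => ring
  | 2 => ring

lemma J_ne_zero [CharZero k] (Ω : MvPolynomial (Fin 3) k)
    (e : MvPolynomial (Fin 3) k →ₐ[k] MvPolynomial (Fin 3) k)
    (h : Good Ω e) : (Jm e).det ≠ 0 := by
  intro h0
  obtain ⟨a, ha, hv⟩ := Matrix.exists_mulVec_eq_zero_iff.2 h0
  apply ha
  ext1 j
  have hap : ∀ f, (∑ j, a j • (pderiv j : Derivation k (MvPolynomial (Fin 3) k) _)) f =
      ∑ j, a j * pderiv j f := by
    intro f
    simp [Fin.sum_univ_three]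
  have h1 := h.killed (AlgHom.id k _) (∑ j, a j • pderiv j) (by
    intro i
    have h2 := congrFun hv i
    simp only [Matrix.mulVec, dotProduct, Jm, Matrix.of_apply, Pi.zero_apply] at h2
    rw [AlgHom.id_apply, hap, ← h2]
    exact Finset.sum_congr rfl fun j _ => mul_comm _ _) (X j)
  rw [AlgHom.id_apply, hap, Finset.sum_eq_single j] at h1
  · simpa using h1
  · intro b _ hb; simp [pderiv_X, hb, hb.symm]
  · simp

lemma hom1_lin (f : MvPolynomial (Fin 3) k) (hf : f.IsHomogeneous 1) :
    f = lin (fun j => constantCoeff (pderiv j f)) := by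
  have h1 := hf.sum_X_mul_pderiv
  rw [one_smul] at h1
  conv_lhs => rw [← h1]
  rw [lin]
  refine Finset.sum_congr rfl fun j _ => ?_
  have h2 : (pderiv j f).IsHomogeneous 0 := hf.pderiv
  rw [← totalDegree_zero_iff_isHomogeneous, totalDegree_eq_zero_iff_eq_C] at h2
  rw [mul_comm]
  congr 1

lemma lin_hom (a : Fin 3 → k) : (lin a).IsHomogeneous 1 :=
  IsHomogeneous.sum _ _ _ fun i _ => isHomogeneous_C_mul_X _ _

/-- If the Jacobian does not vanish at the origin, a linear automorphism fixing the image is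
trivial. -/
lemma triv_of_J (e : MvPolynomial (Fin 3) k →ₐ[k] MvPolynomial (Fin 3) k)
    (hJ : constantCoeff (Jm e).det ≠ 0)
    (φ : MvPolynomial (Fin 3) k →ₐ[k] MvPolynomial (Fin 3) k)
    (hφ : ∀ i, (φ (X i)).IsHomogeneous 1) (hφe : ∀ f, φ (e f) = e f) (i : Fin 3) :
    φ (X i) = X i := by
  have hc : ∀ f, constantCoeff (φ f) = constantCoeff f := by
    intro f
    induction f using MvPolynomial.induction_on with
    | C a => rw [algHom_C']
    | add p q hp hq => simp [hp, hq]
    | mul_X p n hp =>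
      have : constantCoeff (φ (X n)) = 0 := by
        rw [constantCoeff_eq]
        apply (hφ n).coeff_eq_zero
        simp
      simp [this]
  set D : Matrix (Fin 3) (Fin 3) k := (Jm e).map constantCoeff with hD
  set M : Matrix (Fin 3) (Fin 3) k := Matrix.of fun m j => constantCoeff (pderiv j (φ (X m)))
    with hM
  have hDd : IsUnit D.det := by
    rw [isUnit_iff_ne_zero, hD]
    have := RingHom.map_det (constantCoeff : MvPolynomial (Fin 3) k →+* k) (Jm e)
    rw [this] at hJ
    exact hJ
  have h1 : D * M = D := by
    ext i j
    have h2 := congrArg constantCoeff (chain_rule φ j (e (X i)))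
    rw [hφe, map_sum] at h2
    simp only [map_mul, hc] at h2
    rw [Matrix.mul_apply]
    simp only [hD, hM, Matrix.map_apply, Jm, Matrix.of_apply]
    exact h2.symm
  have h2 : M = 1 := by
    have : D⁻¹ * (D * M) = D⁻¹ * D := by rw [h1]
    rwa [← mul_assoc, Matrix.nonsing_inv_mul D hDd, one_mul] at this
  rw [hom1_lin _ (hφ i)]
  conv_rhs => rw [← lin_single]
  congr 1
  ext j
  have := congrFun (congrFun h2 i) j
  simp only [hM, Matrix.of_apply] at this
  rw [this]
  simp [Matrix.one_apply, Pi.single_apply, eq_comm]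

lemma td_pderiv (j : Fin 3) (p : MvPolynomial (Fin 3) k) :
    (pderiv j p).totalDegree ≤ p.totalDegree - 1 := by
  conv_lhs => rw [← sum_homogeneousComponent p, map_sum]
  refine totalDegree_finsetSum_le fun d hd => ?_
  have := (homogeneousComponent_isHomogeneous d p).pderiv (i := j)
  refine this.totalDegree_le.trans ?_
  rw [Finset.mem_range] at hd
  omega

lemma const_of_pderiv [CharZero k] (p : MvPolynomial (Fin 3) k) (h : ∀ j, pderiv j p = 0) :
    p = C (coeff 0 p) := by
  ext m
  rw [coeff_C]
  split_ifs with hm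
  · rw [hm]
  · obtain ⟨j, hj⟩ := Finsupp.ne_iff.1 (Ne.symm hm)
    have h1 := congrArg (coeff (m - Finsupp.single j 1)) (h j)
    rw [coeff_pderiv] at h1
    have hle : Finsupp.single j 1 ≤ m := by
      rw [Finsupp.single_le_iff]
      simp at hj; omega
    rw [tsub_add_cancel_of_le hle] at h1
    simp only [coeff_zero] at h1
    rcases mul_eq_zero.1 h1 with h1 | h1
    · exact h1
    · exfalso
      have : ((((m - Finsupp.single j 1 : Fin 3 →₀ ℕ) j) + 1 : ℕ) : k) = 0 := by push_cast; exact h1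
      exact Nat.succ_ne_zero _ (Nat.cast_eq_zero.1 this)

lemma prime_not_dvd [CharZero k] (q : MvPolynomial (Fin 3) k) (hq : Prime q) :
    ∃ j, ¬ q ∣ pderiv j q := by
  by_contra hcon
  push Not at hcon
  have hz : ∀ j, pderiv j q = 0 := by
    intro j
    by_contra hne
    obtain ⟨h, hh⟩ := hcon j
    have hh0 : h ≠ 0 := by rintro rfl; simp at hh; exact hne hh
    have h1 := td_pderiv j q
    rw [hh, totalDegree_mul_of_isDomain hq.ne_zero hh0] at h1
    have h2 : q.totalDegree = 0 := by omega
    rw [totalDegree_eq_zero_iff_eq_C] at h2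
    apply hne
    rw [h2, pderiv_C]
  have h3 := const_of_pderiv q hz
  apply hq.not_isUnit
  have h0 : coeff 0 q ≠ 0 := by
    intro h0; rw [h0, C_0] at h3; exact hq.ne_zero h3
  rw [h3]
  exact (isUnit_iff_ne_zero.2 h0).map C

lemma graded_sum_zero (t : ℕ → MvPolynomial (Fin 3) k) (N : ℕ)
    (ht : ∀ d, (t d).IsHomogeneous (d + 2)) (h : ∑ d ∈ Finset.range N, t d = 0) (d : ℕ)
    (hd : d < N) : t d = 0 := by
  have h1 := congrArg (homogeneousComponent (d + 2)) h
  rw [map_sum, map_zero, Finset.sum_eq_single d] at h1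
  · rwa [homogeneousComponent_of_mem (ht d), if_pos rfl] at h1
  · intro b _ hb
    rw [homogeneousComponent_of_mem (ht b), if_neg]
    omega
  · intro h2; exact absurd (Finset.mem_range.2 hd) h2

lemma stepA [CharZero k] (Ω J F : MvPolynomial (Fin 3) k) (hΩ0 : Ω ≠ 0)
    (hΩ : Ω.IsHomogeneous 3)
    (hF : ∀ j, pderiv j F = J * pderiv j Ω) (hJ : constantCoeff J = 0)
    (q : MvPolynomial (Fin 3) k) (hq : Prime q) (hqΩ : q ∣ Ω) : q ∣ J := by
  have hrel : ∀ i j, pderiv i J * pderiv j Ω = pderiv j J * pderiv i Ω := by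
    intro i j
    have h1 := pd_comm i j F
    rw [hF, hF, Derivation.leibniz, Derivation.leibniz, pd_comm i j Ω] at h1
    simp only [smul_eq_mul] at h1
    linear_combination h1
  have hE : ∀ j, (∑ i, X i * pderiv i J) * pderiv j Ω = 3 * Ω * pderiv j J := by
    intro j
    have h3 := hΩ.sum_X_mul_pderiv
    have h3' : ∑ i, X i * pderiv i Ω = 3 * Ω := by rw [h3]; simp
    rw [← h3', Finset.sum_mul, Finset.sum_mul]
    refine Finset.sum_congr rfl fun i _ => ?_
    linear_combination X i * hrel i j
  set Jd : ℕ → MvPolynomial (Fin 3) k := fun d => homogeneousComponent d J with hJd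
  have hJh : ∀ d, (Jd d).IsHomogeneous d := fun d => homogeneousComponent_isHomogeneous d J
  have hsum : J = ∑ d ∈ Finset.range (J.totalDegree + 1), Jd d :=
    (sum_homogeneousComponent J).symm
  have h0 : Jd 0 = 0 := by
    simp only [hJd, homogeneousComponent_zero]
    rw [constantCoeff_eq] at hJ
    rw [hJ, C_0]
  have hEJ : ∑ i, X i * pderiv i J = ∑ d ∈ Finset.range (J.totalDegree + 1), (d : MvPolynomial (Fin 3) k) * Jd d := by
    conv_lhs => rw [hsum]
    simp only [map_sum, Finset.mul_sum]
    rw [Finset.sum_comm]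
    refine Finset.sum_congr rfl fun d _ => ?_
    rw [(hJh d).sum_X_mul_pderiv]; simp
  have hcomp : ∀ j d, d < J.totalDegree + 1 →
      (d : MvPolynomial (Fin 3) k) * Jd d * pderiv j Ω = 3 * Ω * pderiv j (Jd d) := by
    intro j d hd
    rw [← sub_eq_zero]
    refine graded_sum_zero (fun d => (d : MvPolynomial (Fin 3) k) * Jd d * pderiv j Ω -
      3 * Ω * pderiv j (Jd d)) (J.totalDegree + 1) ?_ ?_ d hd
    · intro d
      rcases Nat.eq_zero_or_pos d with rfl | hd
      · simp only [h0]
        simpa using isHomogeneous_zero _ _ _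
      · apply IsHomogeneous.sub
        · have h1 : (C (d : k) * Jd d).IsHomogeneous d := (hJh d).C_mul _
          simpa using h1.mul (hΩ.pderiv (i := j))
        · have h1 : (C (3 : k) * Ω).IsHomogeneous 3 := hΩ.C_mul _
          have h2 := h1.mul ((hJh d).pderiv (i := j))
          have h3 : 3 + (d - 1) = d + 2 := by omega
          rw [h3, map_ofNat C 3] at h2
          exact h2
    · rw [Finset.sum_sub_distrib, ← Finset.sum_mul, ← hEJ, hE, ← Finset.mul_sum, ← map_sum,
        ← hsum, sub_self]
  obtain ⟨j, hj⟩ := prime_not_dvd q hq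
  obtain ⟨w, hw, hqw⟩ := (FiniteMultiplicity.of_prime_left hq hΩ0).exists_eq_pow_mul_and_not_dvd
  have ha : multiplicity q Ω ≠ 0 := by
    intro h1
    rw [h1, pow_zero, one_mul] at hw
    rw [hw] at hqΩ
    exact hqw hqΩ
  generalize multiplicity q Ω = a at hw ha
  obtain ⟨m, rfl⟩ := Nat.exists_eq_succ_of_ne_zero ha
  rw [hsum]
  refine Finset.dvd_sum fun d hd => ?_
  rcases Nat.eq_zero_or_pos d with rfl | hd0
  · rw [h0]; exact dvd_zero _
  have h1 := hcomp j d (Finset.mem_range.1 hd)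
  rw [hw, Derivation.leibniz, Derivation.leibniz_pow] at h1
  simp only [smul_eq_mul, nsmul_eq_mul, Nat.succ_eq_add_one, Nat.add_sub_cancel] at h1
  have h2 : ((d * (m + 1) : ℕ) : MvPolynomial (Fin 3) k) * (Jd d * (w * pderiv j q)) =
      q * (3 * w * pderiv j (Jd d) - d * Jd d * pderiv j w) := by
    apply mul_left_cancel₀ (pow_ne_zero m hq.ne_zero)
    push_cast at h1 ⊢
    linear_combination h1
  have h3 : q ∣ ((d * (m + 1) : ℕ) : MvPolynomial (Fin 3) k) * (Jd d * (w * pderiv j q)) :=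
    ⟨_, h2⟩
  rcases hq.dvd_or_dvd h3 with h4 | h4
  · exfalso
    apply hq.not_isUnit
    refine isUnit_of_dvd_unit h4 ?_
    have : ((d * (m + 1) : ℕ) : MvPolynomial (Fin 3) k) = C ((d * (m + 1) : ℕ) : k) := by simp
    rw [this]
    refine (isUnit_iff_ne_zero.2 ?_).map C
    rw [Nat.cast_ne_zero]
    positivity
  · rcases hq.dvd_or_dvd h4 with h5 | h5
    · exact h5
    · rcases hq.dvd_or_dvd h5 with h6 | h6
      · exact absurd h6 hqw
      · exact absurd h6 hj

end Jacobian


section StepB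
variable {k : Type*} [Field k]

lemma algEquiv_eq_one (φ : MvPolynomial (Fin 3) k ≃ₐ[k] MvPolynomial (Fin 3) k)
    (h : ∀ i, φ (X i) = X i) : φ = 1 := by
  have h1 : (φ : MvPolynomial (Fin 3) k →ₐ[k] MvPolynomial (Fin 3) k) = AlgHom.id k _ :=
    MvPolynomial.algHom_ext (fun i => by simpa using h i)
  exact AlgEquiv.ext fun f => DFunLike.congr_fun h1 f

lemma nullst [IsAlgClosed k] (q W : MvPolynomial (Fin 3) k) (hq : Prime q) (hW : ¬ q ∣ W) :
    ∃ v : Fin 3 → k, eval v q = 0 ∧ eval v W ≠ 0 := by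
  by_contra hcon
  push Not at hcon
  apply hW
  have hp : (Ideal.span {q}).IsPrime := (Ideal.span_singleton_prime hq.ne_zero).2 hq
  have h1 := IsPrime.vanishingIdeal_zeroLocus (K := k) (Ideal.span {q})
  rw [← Ideal.mem_span_singleton, ← h1, mem_vanishingIdeal_iff]
  intro v hv
  rw [mem_zeroLocus_iff] at hv
  have h2 := hv q (Ideal.mem_span_singleton_self q)
  exact hcon v h2

/-- directional derivative at a point -/
noncomputable def dirD (u v : Fin 3 → k) (f : MvPolynomial (Fin 3) k) : k :=
  ∑ j, u j * eval v (pderiv j f)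

lemma dirD_mul (u v : Fin 3 → k) (f g : MvPolynomial (Fin 3) k) :
    dirD u v (f * g) = eval v f * dirD u v g + eval v g * dirD u v f := by
  simp only [dirD, Derivation.leibniz, smul_eq_mul, map_add, map_mul, Fin.sum_univ_three]
  ring

lemma dirD_sum {ι : Type*} (s : Finset ι) (u v : Fin 3 → k) (f : ι → MvPolynomial (Fin 3) k) :
    dirD u v (∑ i ∈ s, f i) = ∑ i ∈ s, dirD u v (f i) := by
  simp only [dirD, map_sum, Finset.mul_sum]
  rw [Finset.sum_comm]

lemma dirD_sq (u v : Fin 3 → k) (f g h : MvPolynomial (Fin 3) k) (hh : h ^ 2 * g = f)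
    (h0 : eval v h = 0) : dirD u v f = 0 := by
  rw [← hh, dirD_mul, pow_two, dirD_mul]
  simp [h0]

lemma stepB [IsAlgClosed k]
    (G : Subgroup (MvPolynomial (Fin 3) k ≃ₐ[k] MvPolynomial (Fin 3) k)) [Finite G]
    (e : MvPolynomial (Fin 3) k →ₐ[k] MvPolynomial (Fin 3) k)
    (he : Set.range e = {f : MvPolynomial (Fin 3) k | ∀ φ ∈ G, φ f = f})
    (q : MvPolynomial (Fin 3) k) (hq : Prime q) (hqJ : q ∣ (Jm e).det) :
    ∃ φ ∈ G, φ ≠ 1 ∧ ∀ i, q ∣ φ (X i) - X i := by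
  classical
  by_contra hcon
  push Not at hcon
  have := Fintype.ofFinite G
  have hc : ∀ φ : G, ∃ i, φ ≠ 1 → ¬ q ∣ φ.1 (X i) - X i := by
    intro φ
    by_cases h : φ = 1
    · exact ⟨0, fun h' => absurd h h'⟩
    · obtain ⟨i, hi⟩ := hcon φ.1 φ.2 (fun h1 => h (Subtype.ext h1))
      exact ⟨i, fun _ => hi⟩
  choose i hi using hc
  set S : Finset G := Finset.univ.erase 1 with hS
  obtain ⟨v, hv0, hvW⟩ := nullst q (∏ φ ∈ S, (φ.1 (X (i φ)) - X (i φ))) hq (by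
    intro h
    obtain ⟨φ, hφ, h2⟩ := (Prime.dvd_finsetProd_iff hq _).1 h
    exact hi φ (Finset.ne_of_mem_erase hφ) h2)
  have hdet : ((Jm e).map (eval v)).det = 0 := by
    have h1 := RingHom.map_det (eval v) (Jm e)
    obtain ⟨r, hr⟩ := hqJ
    rw [hr, map_mul, hv0, zero_mul] at h1
    exact h1.symm
  obtain ⟨u, hu, huv⟩ := Matrix.exists_mulVec_eq_zero_iff.2 hdet
  obtain ⟨j, hj⟩ := Function.ne_iff.1 hu
  have hkill : ∀ f, dirD u v (e f) = 0 := by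
    intro f
    have h1 : ∀ i, ∑ j, eval v (pderiv j (e (X i))) * u j = 0 := fun i => congrFun huv i
    simp only [dirD, chain_rule e _ f, map_sum, map_mul, Finset.mul_sum]
    rw [Finset.sum_comm]
    refine Finset.sum_eq_zero fun i _ => ?_
    have h2 := congrArg (fun t => eval v (e (pderiv i f)) * t) (h1 i)
    simp only [Finset.mul_sum, mul_zero] at h2
    rw [← h2]
    refine Finset.sum_congr rfl fun j _ => by ring
  set T : MvPolynomial (Fin 3) k := ∏ ψ ∈ S, (X (i ψ) - C (eval v (ψ.1 (X (i ψ))))) with hT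
  set F : MvPolynomial (Fin 3) k := (X j - C (v j)) * T ^ 2 with hF
  have hinv : (∑ φ : G, φ.1 F) ∈ Set.range e := by
    rw [he]
    intro ψ hψ
    rw [map_sum]
    exact Fintype.sum_equiv (Equiv.mulLeft (⟨ψ, hψ⟩ : G)) _ _ (fun φ => rfl)
  obtain ⟨f', hf'⟩ := hinv
  have h1 := hkill f'
  rw [hf', dirD_sum, Finset.sum_eq_single 1] at h1
  · have h2 : dirD u v F = u j * (eval v T) ^ 2 := by
      rw [hF, dirD_mul]
      have h3 : dirD u v (X j - C (v j)) = u j := by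
        simp only [dirD]
        rw [Finset.sum_eq_single j]
        · simp
        · intro b _ hb; simp [pderiv_X, hb.symm]
        · simp
      rw [h3]
      simp
      ring
    have h4 : dirD u v F = 0 := h1
    rw [h2] at h4
    rcases mul_eq_zero.1 h4 with h5 | h5
    · exact hj h5
    · have h6 : eval v T = 0 := by simpa using h5
      rw [hT, map_prod, Finset.prod_eq_zero_iff] at h6
      obtain ⟨ψ, hψ, h7⟩ := h6
      apply hvW
      rw [map_prod]
      refine Finset.prod_eq_zero hψ ?_
      simp only [map_sub, eval_X, eval_C] at h7 ⊢
      linear_combination -h7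
  · intro φ _ hφ
    have hmem : φ ∈ S := Finset.mem_erase.2 ⟨hφ, Finset.mem_univ _⟩
    have hTd := Finset.mul_prod_erase S (fun ψ => X (i ψ) - C (eval v (ψ.1 (X (i ψ))))) hmem
    rw [← hT] at hTd
    refine dirD_sq u v _ (φ.1 ((X j - C (v j)) *
      (∏ ψ ∈ S.erase φ, (X (i ψ) - C (eval v (ψ.1 (X (i ψ)))))) ^ 2))
      (φ.1 (X (i φ) - C (eval v (φ.1 (X (i φ)))))) ?_ ?_
    · rw [← map_pow, ← map_mul]
      congr 1
      rw [hF, ← hTd]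
      ring
    · have hC : ∀ s, φ.1 (C s) = C s := fun s => algHom_C'
        (φ.1 : MvPolynomial (Fin 3) k →ₐ[k] MvPolynomial (Fin 3) k) s
      rw [map_sub, hC]
      simp
  · simp

lemma dvd_hom1 (q f : MvPolynomial (Fin 3) k) (hq : q.totalDegree = 1) 
    (hf : f.IsHomogeneous 1) (h : q ∣ f) : ∃ s : k, f = C s * q := by
  by_cases hf0 : f = 0
  · exact ⟨0, by simp [hf0]⟩
  obtain ⟨g, hg⟩ := h
  have hq0 : q ≠ 0 := by rintro rfl; simp at hg; exact hf0 hg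
  have hg0 : g ≠ 0 := by rintro rfl; simp at hg; exact hf0 hg
  have h1 := hf.totalDegree hf0
  rw [hg, totalDegree_mul_of_isDomain hq0 hg0, hq] at h1
  have h2 : g.totalDegree = 0 := by omega
  rw [totalDegree_eq_zero_iff_eq_C] at h2
  exact ⟨_, by rw [hg, mul_comm, ← h2]⟩

lemma prime_td (q : MvPolynomial (Fin 3) k) (hq : Prime q) : q.totalDegree ≠ 0 := by
  intro h
  rw [totalDegree_eq_zero_iff_eq_C] at h
  have h0 : coeff 0 q ≠ 0 := by
    intro h0; rw [h0, C_0] at h; exact hq.ne_zero h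
  apply hq.not_isUnit
  rw [h]
  exact (isUnit_iff_ne_zero.2 h0).map C

lemma mkRefl [IsAlgClosed k] [CharZero k]
    (Ω : MvPolynomial (Fin 3) k)
    (G : Subgroup (MvPolynomial (Fin 3) k ≃ₐ[k] MvPolynomial (Fin 3) k)) [Finite G]
    (hG : ∀ φ ∈ G, IsGradedPoissonAut (jacBracket (pderiv 2 Ω) (pderiv 0 Ω) (pderiv 1 Ω)) φ)
    (e : MvPolynomial (Fin 3) k →ₐ[k] MvPolynomial (Fin 3) k)
    (he : Set.range e = {f : MvPolynomial (Fin 3) k | ∀ φ ∈ G, φ f = f})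
    (q : MvPolynomial (Fin 3) k) (hq : Prime q) (hqJ : q ∣ (Jm e).det) :
    ∃ a : Fin 3 → k, a ≠ 0 ∧ q = lin a ∧ Refl Ω e (lin a) := by
  obtain ⟨φ, hφG, hφ1, hdvd⟩ := stepB G e he q hq hqJ
  have hφC : ∀ s, φ (C s) = C s := fun s => algHom_C'
    (φ : MvPolynomial (Fin 3) k →ₐ[k] MvPolynomial (Fin 3) k) s
  have hh : ∀ i, (φ (X i) - X i).IsHomogeneous 1 := fun i =>
    ((hG φ hφG).1 i).sub (isHomogeneous_X _ _)
  have hne : ∃ i, φ (X i) - X i ≠ 0 := by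
    by_contra hcon
    push Not at hcon
    apply hφ1
    apply algEquiv_eq_one
    intro i
    exact sub_eq_zero.1 (hcon i)
  obtain ⟨i0, hi0⟩ := hne
  have hq1 : q.totalDegree = 1 := by
    obtain ⟨g, hg⟩ := hdvd i0
    have hg0 : g ≠ 0 := by rintro rfl; simp at hg; exact hi0 hg
    have h1 := (hh i0).totalDegree hi0
    rw [hg, totalDegree_mul_of_isDomain hq.ne_zero hg0] at h1
    have := prime_td q hq
    omega
  have hd : ∀ i, ∃ s : k, φ (X i) - X i = C s * q := fun i => dvd_hom1 q _ hq1 (hh i) (hdvd i)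
  choose d hd using hd
  have hdi : d i0 ≠ 0 := by
    intro h; apply hi0; rw [hd, h]; simp
  have hqh : q.IsHomogeneous 1 := by
    have h1 := (hh i0).C_mul (d i0)⁻¹
    rwa [hd, ← mul_assoc, ← C_mul, inv_mul_cancel₀ hdi, C_1, one_mul] at h1
  obtain ⟨a, ha⟩ : ∃ a, q = lin a := ⟨_, hom1_lin q hqh⟩
  have ha0 : a ≠ 0 := by
    rintro rfl
    apply hq.ne_zero
    rw [ha]; simp [lin]
  have hφX : ∀ i, φ (X i) = X i + C (d i) * q := fun i => by rw [← hd]; ring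
  have hφq : φ q = C (1 + ∑ i, a i * d i) * q := by
    have h1 : φ q = q + (∑ i, C (a i) * C (d i)) * q := by
      conv_lhs => rw [ha, lin]
      simp only [map_sum, map_mul, hφC, hφX, mul_add, Finset.sum_add_distrib, Finset.sum_mul]
      congr 1
      · rw [ha, lin]
      · simp only [mul_assoc]
    rw [h1]
    simp only [C_add, C_1, map_sum, C_mul]
    ring
  refine ⟨a, ha0, ha, ?_⟩
  rw [← ha]
  refine ⟨φ, ?_, (hG φ hφG).2, d, 1 + ∑ i, a i * d i, ?_, ?_, hφX, hφq⟩
  · intro f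
    have : e f ∈ Set.range e := ⟨f, rfl⟩
    rw [he] at this
    exact this φ hφG
  · intro h1
    rw [h1, C_1, one_mul] at hφq
    have hpow : ∀ n : ℕ, (φ ^ n) (X i0) = X i0 + (n : MvPolynomial (Fin 3) k) * (C (d i0) * q) := by
      intro n
      induction n with
      | zero => simp
      | succ n ih =>
        rw [pow_succ', AlgEquiv.mul_apply, ih]
        simp only [map_add, map_mul, map_natCast, hφX i0, hφC, hφq]
        push_cast
        ring
    have hfo : IsOfFinOrder (⟨φ, hφG⟩ : G) := isOfFinOrder_of_finite _
    obtain ⟨n, hn, hn1⟩ := isOfFinOrder_iff_pow_eq_one.1 hfo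
    have hn2 : φ ^ n = 1 := by
      have := congrArg Subtype.val hn1
      simpa using this
    have h3 := hpow n
    rw [hn2] at h3
    simp [hdi, hq.ne_zero] at h3
    omega
  · intro h1
    rw [h1, C_0, zero_mul] at hφq
    apply hq.ne_zero
    apply φ.injective
    rw [hφq, map_zero]

lemma peel (f : MvPolynomial (Fin 3) k) (n : ℕ) (hf : f.totalDegree = n + 1) :
    ∃ q g, Prime q ∧ f = q * g := by
  have hf0 : f ≠ 0 := by rintro rfl; simp at hf
  have hu : ¬ IsUnit f := by
    intro h
    rw [MvPolynomial.isUnit_iff_totalDegree_of_isReduced] at h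
    omega
  obtain ⟨q, hq, g, hg⟩ := WfDvdMonoid.exists_irreducible_factor hu hf0
  exact ⟨q, g, hq.prime, hg⟩

lemma peel_lin (f : MvPolynomial (Fin 3) k) (n : ℕ) (hf : f.totalDegree = n + 1)
    (R : (Fin 3 → k) → Prop)
    (H : ∀ q, Prime q → q ∣ f → ∃ a : Fin 3 → k, a ≠ 0 ∧ q = lin a ∧ R a) :
    ∃ a g, a ≠ 0 ∧ R a ∧ f = lin a * g ∧ g.totalDegree = n := by
  obtain ⟨q, g, hq, hg⟩ := peel f n hf
  obtain ⟨a, ha, hqa, hR⟩ := H q hq ⟨g, hg⟩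
  have hf0 : f ≠ 0 := by rintro rfl; simp at hf
  have hg0 : g ≠ 0 := by rintro rfl; simp at hg; exact hf0 hg
  refine ⟨a, g, ha, hR, by rw [← hqa, hg], ?_⟩
  have h1 : q.totalDegree = 1 := by
    have := hq.ne_zero
    rw [hqa] at this ⊢
    exact (lin_hom a).totalDegree this
  rw [hg, totalDegree_mul_of_isDomain hq.ne_zero hg0, h1] at hf
  omega

lemma mkGood (Ω : MvPolynomial (Fin 3) k)
    (G : Subgroup (MvPolynomial (Fin 3) k ≃ₐ[k] MvPolynomial (Fin 3) k)) [Finite G]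
    (e : MvPolynomial (Fin 3) k →ₐ[k] MvPolynomial (Fin 3) k)
    (he : Set.range e = {f : MvPolynomial (Fin 3) k | ∀ φ ∈ G, φ f = f})
    (hb : ∀ f g, e (br Ω f g) = br Ω (e f) (e g)) : Good Ω e := by
  refine ⟨hb, fun f => ?_⟩
  have := Fintype.ofFinite G
  set p : Polynomial (MvPolynomial (Fin 3) k) :=
    ∏ φ : G, (Polynomial.X - Polynomial.C (φ.1 f)) with hp
  have hpm : p.Monic := Polynomial.monic_prod_of_monic _ _ fun φ _ => Polynomial.monic_X_sub_C _
  have hinv : ∀ ψ ∈ G, p.map (ψ : MvPolynomial (Fin 3) k →+* MvPolynomial (Fin 3) k) = p := by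
    intro ψ hψ
    rw [hp, Polynomial.map_prod]
    refine Fintype.prod_equiv (Equiv.mulLeft (⟨ψ, hψ⟩ : G)) _ _ (fun φ => ?_)
    simp
  have hl : p ∈ Polynomial.lifts (e : MvPolynomial (Fin 3) k →+* MvPolynomial (Fin 3) k) := by
    rw [Polynomial.lifts_iff_coeff_lifts]
    intro n
    have : p.coeff n ∈ Set.range e := by
      rw [he]
      intro ψ hψ
      have h1 := congrArg (fun r => Polynomial.coeff r n) (hinv ψ hψ)
      simpa using h1
    exact this
  obtain ⟨r, hr, -, hrm⟩ := Polynomial.lifts_and_natDegree_eq_and_monic hl hpm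
  refine ⟨r, hrm, ?_⟩
  rw [← Polynomial.eval_map, hr, hp, Polynomial.eval_prod]
  refine Finset.prod_eq_zero (Finset.mem_univ (1 : G)) ?_
  simp

end StepB

/-- Shephard-Todd-Chevalley for unimodular quadratic Poisson structures on `k[x₁,x₂,x₃]`:
with the Jacobian bracket of a nonzero cubic `Ω`, the invariant subalgebra `P^G` is
isomorphic to `P` as a Poisson algebra iff `G` is trivial. -/
theorem stmt_0 {k : Type*} [Field k] [IsAlgClosed k] [CharZero k]
    (Ω : MvPolynomial (Fin 3) k) (hΩ : Ω ≠ 0) (hhom : Ω.IsHomogeneous 3)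
    (G : Subgroup (MvPolynomial (Fin 3) k ≃ₐ[k] MvPolynomial (Fin 3) k))
    (hG : ∀ φ ∈ G, IsGradedPoissonAut (jacBracket (pderiv 2 Ω) (pderiv 0 Ω) (pderiv 1 Ω)) φ)
    (hfin : Finite G) :
    InvariantsPoissonIso (jacBracket (pderiv 2 Ω) (pderiv 0 Ω) (pderiv 1 Ω)) G ↔ G = ⊥ := by
  constructor
  · rintro ⟨e, -, hrange, hb⟩
    have hgood : Good Ω e := mkGood Ω G e hrange hb
    by_cases hJ : constantCoeff (Jm e).det = 0
    · exfalso
      have hprime : ∀ q, Prime q → q ∣ Ω →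
          ∃ a : Fin 3 → k, a ≠ 0 ∧ q = lin a ∧ Refl Ω e (lin a) := fun q hq hqΩ =>
        mkRefl Ω G hG e hrange q hq
          (stepA Ω (Jm e).det (e Ω) hΩ hhom (dOmega Ω e hb) hJ q hq hqΩ)
      obtain ⟨a, g, ha, ra, hg, hgd⟩ := peel_lin Ω 2 (hhom.totalDegree hΩ)
        (fun a => Refl Ω e (lin a)) hprime
      obtain ⟨b, g', hb0, rb, hg', hgd'⟩ := peel_lin g 1 hgd (fun a => Refl Ω e (lin a))
        (fun q hq hqg => hprime q hq (hqg.trans ⟨lin a, by rw [hg, mul_comm]⟩))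
      obtain ⟨d, g'', hd0, rd, hg'', hgd''⟩ := peel_lin g' 0 hgd' (fun a => Refl Ω e (lin a))
        (fun q hq hqg => hprime q hq (hqg.trans ⟨lin a * lin b, by rw [hg, hg']; ring⟩))
      rw [totalDegree_eq_zero_iff_eq_C] at hgd''
      have hΩe : Ω = C (coeff 0 g'') * (lin a * lin b * lin d) := by
        rw [hg, hg', hg'', ← hgd'']; ring
      have hc : coeff 0 g'' ≠ 0 := by
        intro h0
        rw [h0, C_0, zero_mul] at hΩe
        exact hΩ hΩe
      exact endgame _ hc a b d ha hb0 hd0 Ω hΩe e hgood ra rb rd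
    · rw [Subgroup.eq_bot_iff_forall]
      intro φ hφ
      apply algEquiv_eq_one
      intro i
      exact triv_of_J e hJ (φ : MvPolynomial (Fin 3) k →ₐ[k] MvPolynomial (Fin 3) k)
        (hG φ hφ).1 (by
          intro f
          have : e f ∈ Set.range e := ⟨f, rfl⟩
          rw [hrange] at this
          exact this φ hφ) i
  · rintro rfl
    refine ⟨AlgHom.id k _, Function.injective_id, ?_, fun f g => rfl⟩
    ext f
    simp
end

section
/- Equip P = k[x₁,x₂,x₃] with the Poisson bracket {x₁,x₂} = 0, {x₂,x₃} = 3x₁², {x₃,x₁} = 0. If G is a nontrivial finite subgroup of the graded Poisson automorphism group of P generated by Poisson reflections, then the invariant subalgebra P^G is not isomorphic to P as a Poisson algebra. -/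
open MvPolynomial

theorem aux_pow {k : Type*} [Field k]
    (φ : MvPolynomial (Fin 3) k ≃ₐ[k] MvPolynomial (Fin 3) k)
    (M : Matrix (Fin 3) (Fin 3) k) (hM : ∀ i, φ (X i) = ∑ j, C (M i j) * X j) (n : ℕ) :
    ∀ i, (φ ^ n) (X i) = ∑ j, C ((M ^ n) i j) * X j := by
  induction n with
  | zero =>
    intro i
    simp [Matrix.one_apply, apply_ite C, ite_mul]
  | succ n ih =>
    intro i
    have hC : ∀ c : k, (φ ^ n) (C c) = C c := fun c => (φ ^ n).commutes c
    rw [pow_succ, AlgEquiv.mul_apply, hM, map_sum, pow_succ']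
    simp only [map_mul, hC, ih, Matrix.mul_apply, map_sum, Finset.mul_sum, Finset.sum_mul]
    rw [Finset.sum_comm]
    simp only [mul_assoc]

theorem aux_lin {k : Type*} [Field k] (M N : Matrix (Fin 3) (Fin 3) k)
    (h : ∀ i, ∑ j, (C (M i j) * X j : MvPolynomial (Fin 3) k) = ∑ j, C (N i j) * X j) :
    M = N := by
  ext i j
  have := congrArg (eval (Pi.single j (1 : k))) (h i)
  simpa [Pi.single_apply] using this

theorem aux_refl {k : Type*} [Field k] [CharZero k]
    (φ : MvPolynomial (Fin 3) k ≃ₐ[k] MvPolynomial (Fin 3) k)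
    (h : IsPoissonReflection (jacBracket 0 (3 * X 0 ^ 2) 0) φ) :
    φ (X 0) = C (-1) * X 0 ∧ ∃ b c : k, φ (X 1) = X 1 + C b * X 0 ∧
      φ (X 2) = X 2 + C c * X 0 := by
  obtain ⟨⟨-, hbr⟩, ⟨n, hn, hφn⟩, M, hM, ξ, hξ, ⟨m, hm, hξm⟩, hch⟩ := h
  have hMn : M ^ n = 1 := by
    apply aux_lin
    intro i
    rw [← aux_pow φ M hM n i, hφn]
    simp [Matrix.one_apply, apply_ite C, ite_mul]
  have hb := hbr (X 1) (X 2)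
  have h3 : φ 3 = 3 := map_ofNat φ 3
  simp [jacBracket, hM, Fin.sum_univ_three, pderiv_X, Pi.single_apply, h3] at hb
  have e0 := congrArg (eval (![1, 0, 0] : Fin 3 → k)) hb
  have e1 := congrArg (eval (![0, 1, 0] : Fin 3 → k)) hb
  have e2 := congrArg (eval (![0, 0, 1] : Fin 3 → k)) hb
  simp at e0 e1 e2
  have hc0 : ∀ t : k, ((t - M 0 0) * ((t - M 1 1) * (t - M 2 2) - M 1 2 * M 2 1)) =
      (t - 1) ^ 2 * (t - ξ) := by
    intro t
    have := congrArg (Polynomial.eval t) hch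
    rw [Matrix.eval_charpoly, Matrix.det_fin_three] at this
    simp [e1, e2] at this
    linear_combination this
  have h30 : (3 : k) ≠ 0 := by norm_num
  have ha : M 0 0 ^ 2 = M 1 1 * M 2 2 - M 1 2 * M 2 1 := by
    apply mul_left_cancel₀ h30
    linear_combination e0
  have hξ0 : ξ ≠ 0 := by
    rintro rfl
    simp [hm.ne'] at hξm
  have d0 := hc0 0
  have dd : M 0 0 ^ 3 = ξ := by linear_combination -d0 + M 0 0 * ha
  have da := hc0 (M 0 0)
  have ha1 : M 0 0 ≠ 1 := by
    intro h1
    apply hξ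
    rw [← dd, h1, one_pow]
  have haξ : M 0 0 = ξ := by
    have : (M 0 0 - 1) ^ 2 * (M 0 0 - ξ) = 0 := by rw [← da]; ring
    rcases mul_eq_zero.1 this with h | h
    · exact absurd (sub_eq_zero.1 (pow_eq_zero_iff (two_ne_zero) |>.1 h)) ha1
    · exact sub_eq_zero.1 h
  have ham : M 0 0 = -1 := by
    have h0 : M 0 0 * ((M 0 0 - 1) * (M 0 0 + 1)) = 0 := by
      linear_combination dd - haξ
    rcases mul_eq_zero.1 h0 with h | h
    · exact absurd (haξ ▸ h) hξ0
    rcases mul_eq_zero.1 h with h | h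
    · exact absurd (sub_eq_zero.1 h) ha1
    · exact eq_neg_of_add_eq_zero_left h
  have hξm1 : ξ = -1 := haξ ▸ ham
  have htr : M 1 1 + M 2 2 = 2 := by
    have h1 := hc0 1
    rw [ham, hξm1] at h1
    have h2 : (2 : k) ≠ 0 := two_ne_zero
    rw [ham] at ha
    apply mul_left_cancel₀ h2
    linear_combination -h1 - 2 * ha
  -- semisimplicity
  have hss : (M - 1) * (M + 1) = 0 := by
    have h1 : minpoly k M ∣ (Polynomial.X - 1) ^ 2 * (Polynomial.X - Polynomial.C ξ) := by
      rw [← hch]; exact Matrix.minpoly_dvd_charpoly M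
    have h2 : minpoly k M ∣ (Polynomial.X ^ n - 1) := by
      apply minpoly.dvd; simp [hMn]
    have hs : (Polynomial.X ^ n - 1 : Polynomial k).Separable := by
      have := Polynomial.separable_X_pow_sub_C (1 : k) (n := n)
        (by exact_mod_cast hn.ne') one_ne_zero
      simpa using this
    have h3 : Squarefree (minpoly k M) := hs.squarefree.squarefree_of_dvd h2
    have h4 : minpoly k M ∣ (Polynomial.X - 1) * (Polynomial.X - Polynomial.C ξ) := by
      rw [← h3.dvd_pow_iff_dvd two_ne_zero]
      refine h1.trans ⟨Polynomial.X - Polynomial.C ξ, by ring⟩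
    have h5 := (minpoly.dvd_iff (A := k) (x := M)).1 h4
    simpa [hξm1] using h5
  have g := fun i j => congrFun (congrFun hss i) j
  have g11 := g 1 1
  have g12 := g 1 2
  have g21 := g 2 1
  have g22 := g 2 2
  simp [Matrix.mul_apply, Fin.sum_univ_three, Matrix.one_apply, e1, e2] at g11 g12 g21 g22
  have h20 : (2 : k) ≠ 0 := two_ne_zero
  have q0 : M 1 2 = 0 := by
    apply mul_left_cancel₀ h20
    linear_combination g12 - M 1 2 * htr
  have r0 : M 2 1 = 0 := by
    apply mul_left_cancel₀ h20
    linear_combination g21 - M 2 1 * htr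
  have p1 : M 1 1 = 1 := by
    rw [ham, q0] at ha
    apply mul_left_cancel₀ h20
    rw [q0] at g11
    linear_combination g11 - ha - M 1 1 * htr
  have s1 : M 2 2 = 1 := by linear_combination htr - p1
  refine ⟨?_, M 1 0, M 2 0, ?_, ?_⟩
  · rw [hM, Fin.sum_univ_three, ham, e1, e2]; simp
  · rw [hM, Fin.sum_univ_three, p1, q0]; simp [add_comm]
  · rw [hM, Fin.sum_univ_three, s1, r0]; simp [add_comm]

theorem aux_sum {k : Type*} [Field k]
    (G : Subgroup (MvPolynomial (Fin 3) k ≃ₐ[k] MvPolynomial (Fin 3) k)) [Fintype G]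
    (i : Fin 3) (h : ∀ φ ∈ G, ∃ b : k, φ (X i) = X i + C b * X 0) :
    ∃ B : k, ∀ φ ∈ G, φ (C (Fintype.card G : k) * X i + C B * X 0) =
      C (Fintype.card G : k) * X i + C B * X 0 := by
  choose! b hb using h
  refine ⟨∑ g : G, b g, ?_⟩
  have key : C (Fintype.card G : k) * X i + C (∑ g : G, b g) * X 0 =
      ∑ g : G, (g : MvPolynomial (Fin 3) k ≃ₐ[k] MvPolynomial (Fin 3) k) (X i) := by
    have h1 : ∀ g : G, (g : MvPolynomial (Fin 3) k ≃ₐ[k] MvPolynomial (Fin 3) k) (X i) =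
        X i + C (b g) * X 0 := fun g => hb g.1 g.2
    simp only [h1, Finset.sum_add_distrib]
    simp [Finset.sum_mul]
  intro φ hφ
  rw [key, map_sum]
  exact Fintype.sum_equiv (Equiv.mulLeft (⟨φ, hφ⟩ : G)) _ _ fun g => rfl

theorem stmt_11 {k : Type*} [Field k] [IsAlgClosed k] [CharZero k]
    (G : Subgroup (MvPolynomial (Fin 3) k ≃ₐ[k] MvPolynomial (Fin 3) k))
    (hG : ∀ φ ∈ G, IsGradedPoissonAut (jacBracket 0 (3 * X 0 ^ 2) 0) φ)
    (hfin : Finite G) (hnt : G ≠ ⊥)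
    (hgen : ∃ S : Set (MvPolynomial (Fin 3) k ≃ₐ[k] MvPolynomial (Fin 3) k),
      (∀ φ ∈ S, IsPoissonReflection (jacBracket 0 (3 * X 0 ^ 2) 0) φ) ∧ Subgroup.closure S = G) :
    ¬ InvariantsPoissonIso (jacBracket 0 (3 * X 0 ^ 2) 0) G := by
  obtain ⟨S, hS, hSG⟩ := hgen
  rintro ⟨e, hinj, hrange, hbr⟩
  have hfix : ∀ f, ∀ φ ∈ G, φ (e f) = e f := by
    intro f
    have : e f ∈ Set.range e := ⟨f, rfl⟩
    rw [hrange] at this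
    exact this
  obtain ⟨ψ, hψ⟩ : S.Nonempty := by
    rw [Set.nonempty_iff_ne_empty]
    rintro rfl
    exact hnt (by rw [← hSG, Subgroup.closure_empty])
  have hψG : ψ ∈ G := hSG ▸ Subgroup.subset_closure hψ
  have hψ0 := (aux_refl ψ (hS ψ hψ)).1
  have hC : ∀ (φ : MvPolynomial (Fin 3) k ≃ₐ[k] MvPolynomial (Fin 3) k) (c : k),
      φ (C c) = C c := fun φ c => φ.commutes c
  have hall : ∀ φ ∈ G, ∃ a b c : k, a ≠ 0 ∧ φ (X 0) = C a * X 0 ∧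
      φ (X 1) = X 1 + C b * X 0 ∧ φ (X 2) = X 2 + C c * X 0 := by
    intro φ hφ
    rw [← hSG] at hφ
    induction hφ using Subgroup.closure_induction with
    | mem x hx =>
      obtain ⟨h0, b, c, h1, h2⟩ := aux_refl x (hS x hx)
      exact ⟨-1, b, c, by simp, h0, h1, h2⟩
    | one => exact ⟨1, 0, 0, one_ne_zero, by simp, by simp, by simp⟩
    | mul x y _ _ hx hy =>
      obtain ⟨a, b, c, ha, h0, h1, h2⟩ := hx
      obtain ⟨a', b', c', ha', h0', h1', h2'⟩ := hy
      refine ⟨a' * a, b + b' * a, c + c' * a, mul_ne_zero ha' ha, ?_, ?_, ?_⟩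
      · rw [AlgEquiv.mul_apply, h0', map_mul, hC, h0, C_mul, mul_assoc]
      · rw [AlgEquiv.mul_apply, h1', map_add, map_mul, hC, h0, h1, C_add, C_mul]; ring
      · rw [AlgEquiv.mul_apply, h2', map_add, map_mul, hC, h0, h2, C_add, C_mul]; ring
    | inv x _ hx =>
      obtain ⟨a, b, c, ha, h0, h1, h2⟩ := hx
      have hca : (C a * C a⁻¹ : MvPolynomial (Fin 3) k) = 1 := by
        rw [← C_mul, mul_inv_cancel₀ ha, C_1]
      have hxi : ∀ p q, x q = p → x⁻¹ p = q := by
        rintro p q rfl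
        exact x.symm_apply_apply q
      refine ⟨a⁻¹, -b * a⁻¹, -c * a⁻¹, inv_ne_zero ha, hxi _ _ ?_, hxi _ _ ?_, hxi _ _ ?_⟩
      · rw [map_mul, hC, h0]; linear_combination X 0 * hca
      · rw [map_add, map_mul, hC, h0, h1, C_mul, C_neg]; linear_combination -C b * X 0 * hca
      · rw [map_add, map_mul, hC, h0, h2, C_mul, C_neg]; linear_combination -C c * X 0 * hca
  haveI : Fintype G := Fintype.ofFinite G
  obtain ⟨B, hB⟩ := aux_sum G 1 fun φ hφ => by
    obtain ⟨_, b, _, _, _, h, _⟩ := hall φ hφ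
    exact ⟨b, h⟩
  obtain ⟨D, hD⟩ := aux_sum G 2 fun φ hφ => by
    obtain ⟨_, _, c, _, _, _, h⟩ := hall φ hφ
    exact ⟨c, h⟩
  have hN : (Fintype.card G : k) ≠ 0 := by exact_mod_cast Fintype.card_ne_zero
  generalize (Fintype.card G : k) = N at hB hD hN
  have hB' : C N * X 1 + C B * X 0 ∈ Set.range e := by rw [hrange]; exact hB
  have hD' : C N * X 2 + C D * X 0 ∈ Set.range e := by rw [hrange]; exact hD
  obtain ⟨f, hf⟩ := hB'
  obtain ⟨g, hg⟩ := hD'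
  have hfg := hbr f g
  rw [hf, hg] at hfg
  have he3 : e 3 = 3 := map_ofNat e 3
  simp [jacBracket, pderiv_X, Pi.single_apply, he3] at hfg
  have h30 : (3 : MvPolynomial (Fin 3) k) ≠ 0 := by
    exact_mod_cast (Nat.cast_ne_zero (R := MvPolynomial (Fin 3) k)).2 (by norm_num : (3:ℕ) ≠ 0)
  have hCN : (C N * C N⁻¹ : MvPolynomial (Fin 3) k) = 1 := by
    rw [← C_mul, mul_inv_cancel₀ hN, C_1]
  have hdvd2 : e (X 0) ^ 2 ∣ (X 0 : MvPolynomial (Fin 3) k) ^ 2 := by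
    refine ⟨C N⁻¹ ^ 2 * (e (pderiv 1 f) * e (pderiv 2 g) - e (pderiv 2 f) * e (pderiv 1 g)), ?_⟩
    apply mul_left_cancel₀ h30
    linear_combination (-C N⁻¹ ^ 2) * hfg - 3 * X 0 ^ 2 * (1 + C N * C N⁻¹) * hCN
  have hdvd : e (X 0) ∣ X 0 := (IsIntegrallyClosed.pow_dvd_pow_iff two_ne_zero).1 hdvd2
  obtain ⟨w, hw⟩ := hdvd
  have hirr : Irreducible (X 0 : MvPolynomial (Fin 3) k) := MvPolynomial.X_prime.irreducible
  rcases hirr.isUnit_or_isUnit hw with hu | hu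
  · obtain ⟨c, _, hc⟩ := MvPolynomial.isUnit_iff_eq_C_of_isReduced.1 hu
    have h1 : e (X 0) = e (C c) := by
      rw [hc]; exact (e.commutes c).symm
    have h2 := hinj h1
    have := congrArg (pderiv 0) h2
    simp at this
  · obtain ⟨c, _, hc⟩ := MvPolynomial.isUnit_iff_eq_C_of_isReduced.1 hu
    have h1 := congrArg ψ hw
    rw [map_mul, hfix _ ψ hψG, hc, hC, hψ0, ← hc, ← hw] at h1
    have := congrArg (pderiv 0) h1
    simp at this
    have h2 : (2 : MvPolynomial (Fin 3) k) = 0 := by linear_combination -this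
    exact two_ne_zero h2
end

section
/- Equip P = k[x₁,x₂,x₃] with the Poisson bracket {x₁,x₂} = 0, {x₂,x₃} = 2x₁x₂ + x₂², {x₃,x₁} = x₁² + 2x₁x₂. If G is a nontrivial finite subgroup of the graded Poisson automorphism group of P generated by Poisson reflections, then the invariant subalgebra P^G is not isomorphic to P as a Poisson algebra. -/
open MvPolynomial

namespace PoisAux

variable {k : Type*} [Field k]

/-- the bracket at hand -/
noncomputable abbrev br (f g : MvPolynomial (Fin 3) k) : MvPolynomial (Fin 3) k :=
  jacBracket 0 (2 * X 0 * X 1 + X 1 ^ 2) (X 0 ^ 2 + 2 * X 0 * X 1) f g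

/-- restriction to a line through the origin -/
noncomputable def rho (v : Fin 3 → k) : MvPolynomial (Fin 3) k →ₐ[k] Polynomial k :=
  aeval (fun i => Polynomial.C (v i) * Polynomial.X)

lemma rho_X (v : Fin 3 → k) (i : Fin 3) : rho v (X i) = Polynomial.C (v i) * Polynomial.X := by
  simp [rho]

lemma rho_C (v : Fin 3 → k) (c : k) : rho v (C c) = Polynomial.C c := by
  simp [rho]

lemma rho_two (v : Fin 3 → k) : rho v 2 = 2 := map_ofNat (rho v) 2

lemma C_two : (Polynomial.C (2 : k)) = 2 := map_ofNat Polynomial.C 2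

lemma C_three : (Polynomial.C (3 : k)) = 3 := map_ofNat Polynomial.C 3

lemma C_six : (Polynomial.C (6 : k)) = 6 := map_ofNat Polynomial.C 6

lemma rho_eigen (v : Fin 3 → k) (ξ : k) (g : MvPolynomial (Fin 3) k ≃ₐ[k] MvPolynomial (Fin 3) k)
    (hg : ∀ i, rho v (g (X i)) = Polynomial.C (ξ * v i) * Polynomial.X)
    (h : MvPolynomial (Fin 3) k) (hh : g h = h) (n : ℕ) (hn : ξ ^ n ≠ 1) :
    (rho v h).coeff n = 0 := by
  have key : (rho v).comp (g : MvPolynomial (Fin 3) k →ₐ[k] MvPolynomial (Fin 3) k)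
      = (Polynomial.aeval (Polynomial.C ξ * Polynomial.X)).comp (rho v) := by
    apply MvPolynomial.algHom_ext
    intro i
    change rho v (g (X i)) = _
    simp only [AlgHom.comp_apply, hg, rho_X, map_mul, Polynomial.aeval_X,
      Polynomial.aeval_C, Polynomial.algebraMap_eq]
    ring
  have h1 := congrArg (fun F => (F h).coeff n) key
  change (rho v (g h)).coeff n = (Polynomial.aeval (Polynomial.C ξ * Polynomial.X) (rho v h)).coeff n at h1
  rw [hh] at h1
  have h2 : (Polynomial.aeval (Polynomial.C ξ * Polynomial.X) (rho v h)).coeff n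
      = (rho v h).coeff n * ξ ^ n := by
    have : (Polynomial.aeval (Polynomial.C ξ * Polynomial.X) (rho v h))
      = (rho v h).comp (Polynomial.C ξ * Polynomial.X) := by
        rw [Polynomial.comp, Polynomial.aeval_def, Polynomial.algebraMap_eq]
    rw [this, Polynomial.comp_C_mul_X_coeff]
  rw [h2] at h1
  have h3 : (rho v h).coeff n * (ξ ^ n - 1) = 0 := by linear_combination -h1
  rcases mul_eq_zero.mp h3 with h | h
  · exact h
  · exact absurd (sub_eq_zero.mp h) hn

lemma rho_br_coeff_zero (v : Fin 3 → k) (f g : MvPolynomial (Fin 3) k) :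
    (rho v (br f g)).coeff 0 = 0 := by
  simp [br, jacBracket, rho_X, Polynomial.mul_coeff_zero, pow_two]

lemma core [CharZero k] (G : Subgroup (MvPolynomial (Fin 3) k ≃ₐ[k] MvPolynomial (Fin 3) k))
    (hinv : InvariantsPoissonIso (k := k) br G)
    (a b : MvPolynomial (Fin 3) k) (ha : ∀ φ ∈ G, φ a = a) (hb : ∀ φ ∈ G, φ b = b)
    (g : MvPolynomial (Fin 3) k ≃ₐ[k] MvPolynomial (Fin 3) k) (hgG : g ∈ G)
    (v : Fin 3 → k) (ξ : k)
    (hg : ∀ i, rho v (g (X i)) = Polynomial.C (ξ * v i) * Polynomial.X)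
    (d : ℕ) (hd : 0 < d) (hξ : ∀ n, 0 < n → n < d → ξ ^ n ≠ 1)
    (κ : k) (hκ : κ ≠ 0) (hab : rho v (br a b) = Polynomial.C κ * Polynomial.X ^ d) : False := by
  obtain ⟨e, -, hr, hbr⟩ := hinv
  have hmem : ∀ f, ∀ φ ∈ G, φ (e f) = e f := by
    intro f
    have : e f ∈ Set.range e := ⟨f, rfl⟩
    rw [hr] at this
    exact this
  obtain ⟨f, rfl⟩ : a ∈ Set.range e := by rw [hr]; exact ha
  obtain ⟨h, rfl⟩ : b ∈ Set.range e := by rw [hr]; exact hb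
  have e1 : e (2 * X 0 * X 1 + X 1 ^ 2) = br (e (X 1)) (e (X 2)) := by
    rw [← hbr]; simp [br, jacBracket, pderiv_X]
  have e2 : e (X 0 ^ 2 + 2 * X 0 * X 1) = br (e (X 2)) (e (X 0)) := by
    rw [← hbr]; simp [br, jacBracket, pderiv_X]
  have c1 := rho_br_coeff_zero v (e (X 1)) (e (X 2))
  have c2 := rho_br_coeff_zero v (e (X 2)) (e (X 0))
  rw [← e1] at c1
  rw [← e2] at c2
  simp only [map_add, map_mul, map_pow, map_ofNat, Polynomial.coeff_add, Polynomial.mul_coeff_zero,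
    pow_two, Polynomial.coeff_ofNat_zero] at c1 c2
  set A := (rho v (e (X 0))).coeff 0 with hA
  set B := (rho v (e (X 1))).coeff 0 with hB
  have AB : A = 0 ∧ B = 0 := by
    have h3 : A ^ 4 = 0 := by linear_combination (-1/3) * ((A ^ 2 - 2 * A * B) * c2 - 4 * A ^ 2 * c2 + 4 * A ^ 2 * c1)
    have h4 : A = 0 := pow_eq_zero_iff (by norm_num) |>.mp h3
    refine ⟨h4, ?_⟩
    rw [h4] at c1
    simpa using c1
  have dv : ∀ i : Fin 3, (rho v (e (X i))).coeff 0 = 0 →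
      (Polynomial.X : Polynomial k) ^ d ∣ rho v (e (X i)) := by
    intro i hi
    rw [Polynomial.X_pow_dvd_iff]
    intro n hn
    rcases Nat.eq_zero_or_pos n with rfl | h0
    · exact hi
    · exact rho_eigen v ξ g hg _ (hmem _ g hgG) n (hξ n h0 hn)
  obtain ⟨P, hP⟩ := dv 0 AB.1
  obtain ⟨Q, hQ⟩ := dv 1 AB.2
  have hdv : (Polynomial.X : Polynomial k) ^ (2 * d) ∣ rho v (br (e f) (e h)) := by
    rw [← hbr]
    simp only [br, jacBracket, map_add, map_mul, map_pow, map_ofNat, mul_zero, zero_add, hP, hQ]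
    refine dvd_add (Dvd.dvd.mul_left ⟨2 * P * Q + Q ^ 2, by ring⟩ _)
      (Dvd.dvd.mul_left ⟨P ^ 2 + 2 * P * Q, by ring⟩ _)
  rw [hab, Polynomial.X_pow_dvd_iff] at hdv
  have := hdv d (by omega)
  simp at this
  exact hκ this

/-- the shape of elements of G -/
def Shape (φ : MvPolynomial (Fin 3) k ≃ₐ[k] MvPolynomial (Fin 3) k) : Prop :=
  (∃ a b : k, φ (X 0) = C a * X 0 + C b * X 1) ∧ (∃ a b : k, φ (X 1) = C a * X 0 + C b * X 1) ∧
    ∃ a b : k, φ (X 2) = C a * X 0 + C b * X 1 + X 2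

lemma Shape.one : Shape (1 : MvPolynomial (Fin 3) k ≃ₐ[k] MvPolynomial (Fin 3) k) :=
  ⟨⟨1, 0, by simp⟩, ⟨0, 1, by simp⟩, ⟨0, 0, by simp⟩⟩

lemma aut_C (φ : MvPolynomial (Fin 3) k ≃ₐ[k] MvPolynomial (Fin 3) k) (c : k) : φ (C c) = C c := by
  rw [← MvPolynomial.algebraMap_eq]; exact φ.commutes c

lemma Shape.mul {φ ψ : MvPolynomial (Fin 3) k ≃ₐ[k] MvPolynomial (Fin 3) k}
    (hs : Shape φ) (hs' : Shape ψ) : Shape (φ * ψ) := by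
  obtain ⟨⟨a, b, h0⟩, ⟨c, d, h1⟩, ⟨r, s, h2⟩⟩ := hs
  obtain ⟨⟨a', b', h0'⟩, ⟨c', d', h1'⟩, ⟨r', s', h2'⟩⟩ := hs'
  refine ⟨⟨a' * a + b' * c, a' * b + b' * d, ?_⟩, ⟨c' * a + d' * c, c' * b + d' * d, ?_⟩,
    ⟨r' * a + s' * c + r, r' * b + s' * d + s, ?_⟩⟩
  all_goals
    simp only [AlgEquiv.mul_apply, h0', h1', h2', map_add, map_mul, aut_C, h0, h1, h2]
    ring

/-- type 1 -/
def T (i : Fin 3) (φ : MvPolynomial (Fin 3) k ≃ₐ[k] MvPolynomial (Fin 3) k) : Prop :=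
  match i with
  | 0 => φ (X 0) = - X 0 ∧ φ (X 1) = X 0 + X 1
  | 1 => φ (X 0) = X 0 + X 1 ∧ φ (X 1) = - X 1
  | 2 => φ (X 0) = - X 1 ∧ φ (X 1) = - X 0

lemma quad_coeffs [CharZero k] {a b c : k} {p q r : k}
    (h : (C a * X 0 ^ 2 + C b * X 0 * X 1 + C c * X 1 ^ 2 : MvPolynomial (Fin 3) k)
      = C p * X 0 ^ 2 + C q * X 0 * X 1 + C r * X 1 ^ 2) : a = p ∧ b = q ∧ c = r := by
  have h1 := congrArg (eval ![1, 0, 0]) h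
  have h2 := congrArg (eval ![0, 1, 0]) h
  have h3 := congrArg (eval ![1, 1, 0]) h
  simp at h1 h2 h3
  refine ⟨h1, ?_, h2⟩
  linear_combination h3 - h1 - h2

lemma br_lin (a b c p q r : k) :
    br (C a * X 0 + C b * X 1 + C c * X 2) (C p * X 0 + C q * X 1 + C r * X 2)
     = C (a * r - c * p) * (-1) * (X 0 ^ 2 + 2 * X 0 * X 1)
      + C (b * r - c * q) * (2 * X 0 * X 1 + X 1 ^ 2) := by
  simp [br, jacBracket, pderiv_X]
  ring

lemma alg_p {a b c d p q r s α ξ : k}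
    (c0 : (0 - a) * ((0 - d) * (0 - α) - q * s) - b * (c * (0 - α) + q * r)
      - p * (c * s + (0 - d) * r) = (0 - 1) ^ 2 * (0 - ξ))
    (t1 : 0 = p * c - a * q) (t2 : 0 = b * q - p * d) : p * ξ = 0 := by
  linear_combination p * c0 + (b * α - p * s) * t1 + (a * α - p * r) * t2

lemma alg_q {a b c d p q r s α ξ : k}
    (c0 : (0 - a) * ((0 - d) * (0 - α) - q * s) - b * (c * (0 - α) + q * r)
      - p * (c * s + (0 - d) * r) = (0 - 1) ^ 2 * (0 - ξ))
    (t1 : 0 = p * c - a * q) (t2 : 0 = b * q - p * d) : q * ξ = 0 := by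
  linear_combination q * c0 + (d * α - q * s) * t1 + (c * α - q * r) * t2

lemma alg_fin [CharZero k] {a b c d α ξ : k} (h0 : ξ ≠ 0) (h1 : ξ ≠ 1)
    (c0 : α * (a * d - b * c) = ξ)
    (c1 : (1 - α) * ((1 - a) * (1 - d) - b * c) = 0)
    (c2 : (-1 - α) * ((-1 - a) * (-1 - d) - b * c) = 4 * (-1 - ξ))
    (u1 : 2 * a * c + c ^ 2 = - (c * α))
    (u2 : 2 * b * d + d ^ 2 = d * α)
    (u3 : 2 * (a + b) * (c + d) + (c + d) ^ 2 = - (c * α) * 3 + d * α * 3)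
    (w1 : a ^ 2 + 2 * a * c = α * a)
    (w2 : b ^ 2 + 2 * b * d = - (α * b))
    (w3 : (a + b) ^ 2 + 2 * (a + b) * (c + d) = α * a * 3 - α * b * 3) :
    α = 1 ∧ ((a = -1 ∧ b = 0 ∧ c = 1 ∧ d = 1) ∨ (a = 1 ∧ b = 1 ∧ c = 0 ∧ d = -1) ∨
      (a = 0 ∧ b = -1 ∧ c = -1 ∧ d = 0)) := by
  have e1 : c = 0 ∨ c = - α - 2 * a := by
    have : c * (c - (- α - 2 * a)) = 0 := by linear_combination u1
    rcases mul_eq_zero.mp this with h | h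
    · exact Or.inl h
    · exact Or.inr (sub_eq_zero.mp h)
  have e2 : d = 0 ∨ d = α - 2 * b := by
    have : d * (d - (α - 2 * b)) = 0 := by linear_combination u2
    rcases mul_eq_zero.mp this with h | h
    · exact Or.inl h
    · exact Or.inr (sub_eq_zero.mp h)
  have e3 : a = 0 ∨ a = α - 2 * c := by
    have : a * (a - (α - 2 * c)) = 0 := by linear_combination w1
    rcases mul_eq_zero.mp this with h | h
    · exact Or.inl h
    · exact Or.inr (sub_eq_zero.mp h)
  have e4 : b = 0 ∨ b = - α - 2 * d := by
    have : b * (b - (- α - 2 * d)) = 0 := by linear_combination w2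
    rcases mul_eq_zero.mp this with h | h
    · exact Or.inl h
    · exact Or.inr (sub_eq_zero.mp h)
  have hα : α ≠ 0 := by
    rintro rfl
    exact h0 (by rw [← c0, zero_mul])
  rcases e1 with e1 | e1 <;> rcases e2 with e2 | e2 <;> rcases e3 with e3 | e3 <;>
    rcases e4 with e4 | e4 <;> grind

lemma refl_type [CharZero k] (φ : MvPolynomial (Fin 3) k ≃ₐ[k] MvPolynomial (Fin 3) k)
    (h : IsPoissonReflection br φ) : Shape φ ∧ ∃ i, T i φ := by
  obtain ⟨⟨-, hφ⟩, -, M, hM, ξ, hξ1, ⟨m, hm, hξm⟩, hch⟩ := h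
  have hξ0 : ξ ≠ 0 := by
    rintro rfl
    rw [zero_pow hm.ne'] at hξm
    exact zero_ne_one hξm
  obtain ⟨a, ea⟩ : ∃ a, a = M 0 0 := ⟨_, rfl⟩
  obtain ⟨b, eb⟩ : ∃ a, a = M 0 1 := ⟨_, rfl⟩
  obtain ⟨p, ep⟩ : ∃ a, a = M 0 2 := ⟨_, rfl⟩
  obtain ⟨c, ec⟩ : ∃ a, a = M 1 0 := ⟨_, rfl⟩
  obtain ⟨d, ed⟩ : ∃ a, a = M 1 1 := ⟨_, rfl⟩
  obtain ⟨q, eq⟩ : ∃ a, a = M 1 2 := ⟨_, rfl⟩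
  obtain ⟨r, er⟩ : ∃ a, a = M 2 0 := ⟨_, rfl⟩
  obtain ⟨s, es⟩ : ∃ a, a = M 2 1 := ⟨_, rfl⟩
  obtain ⟨α, eα⟩ : ∃ a, a = M 2 2 := ⟨_, rfl⟩
  have l0 := hM 0
  have l1 := hM 1
  have l2 := hM 2
  rw [Fin.sum_univ_three] at l0 l1 l2
  rw [← ea, ← eb, ← ep] at l0
  rw [← ec, ← ed, ← eq] at l1
  rw [← er, ← es, ← eα] at l2
  have chp : ∀ t : k, (t - a) * ((t - d) * (t - α) - q * s) - b * (c * (t - α) + q * r)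
      - p * (c * s + (t - d) * r) = (t - 1) ^ 2 * (t - ξ) := by
    intro t
    have := congrArg (Polynomial.eval t) hch
    rw [Matrix.eval_charpoly, Matrix.det_fin_three] at this
    simp [Matrix.sub_apply, ← ea, ← eb, ← ec, ← ed, ← ep, ← eq, ← er, ← es, ← eα] at this
    linear_combination this
  clear hch hM ea eb ec ed ep eq er es eα
  have c0 := chp 0
  have c1 := chp 1
  have c2 := chp (-1)
  -- bracket equations
  have b01 := hφ (X 0) (X 1)
  have b12 := hφ (X 1) (X 2)
  have b20 := hφ (X 2) (X 0)
  have z01 : br (X 0 : MvPolynomial (Fin 3) k) (X 1) = 0 := by simp [br, jacBracket, pderiv_X]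
  have z12 : br (X 1 : MvPolynomial (Fin 3) k) (X 2) = 2 * X 0 * X 1 + X 1 ^ 2 := by
    simp [br, jacBracket, pderiv_X]
  have z20 : br (X 2 : MvPolynomial (Fin 3) k) (X 0) = X 0 ^ 2 + 2 * X 0 * X 1 := by
    simp [br, jacBracket, pderiv_X]
  rw [z01, map_zero, l0, l1, br_lin] at b01
  rw [z12, l1, l2, br_lin] at b12
  rw [z20, l2, l0, br_lin] at b20
  simp only [map_add, map_mul, map_pow, map_ofNat, l0, l1] at b12 b20
  have t1 := congrArg (eval ![1, 0, 0]) b01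
  have t2 := congrArg (eval ![0, 1, 0]) b01
  simp at t1 t2
  have hp : p = 0 := by
    have : p * ξ = 0 := alg_p c0 t1 t2
    simpa [hξ0] using this
  have hq : q = 0 := by
    have : q * ξ = 0 := alg_q c0 t1 t2
    simpa [hξ0] using this
  subst hp hq
  have u1 := congrArg (eval ![1, 0, 0]) b12
  have u2 := congrArg (eval ![0, 1, 0]) b12
  have u3 := congrArg (eval ![1, 1, 0]) b12
  have w1 := congrArg (eval ![1, 0, 0]) b20
  have w2 := congrArg (eval ![0, 1, 0]) b20
  have w3 := congrArg (eval ![1, 1, 0]) b20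
  simp at u1 u2 u3 w1 w2 w3
  clear b01 b12 b20 z01 z12 z20 t1 t2 chp hφ
  have fin : α = 1 ∧ ((a = -1 ∧ b = 0 ∧ c = 1 ∧ d = 1) ∨ (a = 1 ∧ b = 1 ∧ c = 0 ∧ d = -1) ∨
      (a = 0 ∧ b = -1 ∧ c = -1 ∧ d = 0)) := by
    apply alg_fin hξ0 hξ1 <;> first | linear_combination -c0 | linear_combination c1 | linear_combination c2 | linear_combination u1 | linear_combination u2 | linear_combination u3 | linear_combination w1 | linear_combination w2 | linear_combination w3
  obtain ⟨rfl, hcase⟩ := fin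
  refine ⟨⟨⟨a, b, by simpa using l0⟩, ⟨c, d, by simpa using l1⟩, ⟨r, s, by simpa using l2⟩⟩, ?_⟩
  rcases hcase with ⟨rfl, rfl, rfl, rfl⟩ | ⟨rfl, rfl, rfl, rfl⟩ | ⟨rfl, rfl, rfl, rfl⟩
  · exact ⟨0, by simpa using l0, by simpa using l1⟩
  · exact ⟨1, by simpa using l0, by simpa using l1⟩
  · exact ⟨2, by simpa using l0, by simpa using l1⟩

lemma fix_of_gen (G : Subgroup (MvPolynomial (Fin 3) k ≃ₐ[k] MvPolynomial (Fin 3) k))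
    (S : Set (MvPolynomial (Fin 3) k ≃ₐ[k] MvPolynomial (Fin 3) k)) (hS : Subgroup.closure S = G)
    (b : MvPolynomial (Fin 3) k) (hb : ∀ φ ∈ S, φ b = b) : ∀ φ ∈ G, φ b = b := by
  have : G ≤ MulAction.stabilizer (MvPolynomial (Fin 3) k ≃ₐ[k] MvPolynomial (Fin 3) k) b := by
    rw [← hS, Subgroup.closure_le]
    intro φ hφ
    exact hb φ hφ
  intro φ hφ
  exact this hφ

lemma shape_of_gen (G : Subgroup (MvPolynomial (Fin 3) k ≃ₐ[k] MvPolynomial (Fin 3) k))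
    (hfin : Finite G)
    (S : Set (MvPolynomial (Fin 3) k ≃ₐ[k] MvPolynomial (Fin 3) k)) (hS : Subgroup.closure S = G)
    (hb : ∀ φ ∈ S, Shape φ) : ∀ φ ∈ G, Shape φ := by
  have hfo : ∀ x ∈ S, IsOfFinOrder x := by
    intro x hx
    have hxG : x ∈ G := hS ▸ Subgroup.subset_closure hx
    have := isOfFinOrder_of_finite (⟨x, hxG⟩ : G)
    exact (Submonoid.isOfFinOrder_coe (H := G.toSubmonoid) (x := ⟨x, hxG⟩)).mpr this
  intro φ hφ
  rw [← hS, ← Subgroup.mem_toSubmonoid, Subgroup.closure_toSubmonoid_of_isOfFinOrder hfo] at hφ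
  induction hφ using Submonoid.closure_induction with
  | mem x hx => exact hb x hx
  | one => exact Shape.one
  | mul x y _ _ hx hy => exact hx.mul hy

lemma exists_inv [CharZero k] (G : Subgroup (MvPolynomial (Fin 3) k ≃ₐ[k] MvPolynomial (Fin 3) k))
    (hfin : Finite G) (hb : ∀ φ ∈ G, Shape φ) :
    ∃ (r s N : k), N ≠ 0 ∧ ∀ φ ∈ G, φ (C r * X 0 + C s * X 1 + C N * X 2)
      = C r * X 0 + C s * X 1 + C N * X 2 := by
  classical
  have := Fintype.ofFinite G
  choose r s hrs using fun φ : G => (hb φ φ.2).2.2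
  have key : (C (∑ φ, r φ) * X 0 + C (∑ φ, s φ) * X 1 + C (Fintype.card G : k) * X 2
      : MvPolynomial (Fin 3) k) = ∑ φ : G, (φ : MvPolynomial (Fin 3) k ≃ₐ[k] MvPolynomial (Fin 3) k) (X 2) := by
    simp only [hrs, Finset.sum_add_distrib, map_sum, Finset.sum_mul]
    simp
  refine ⟨∑ φ, r φ, ∑ φ, s φ, (Fintype.card G : k), ?_, ?_⟩
  rotate_left
  · intro ψ hψ
    rw [key, map_sum]
    exact Fintype.sum_equiv (Equiv.mulLeft (⟨ψ, hψ⟩ : G)) _ _ (fun x => rfl)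
  · exact_mod_cast Fintype.card_ne_zero

lemma core2 [CharZero k] (G : Subgroup (MvPolynomial (Fin 3) k ≃ₐ[k] MvPolynomial (Fin 3) k))
    (hinv : InvariantsPoissonIso (k := k) br G) (hfin : Finite G) (hsh : ∀ φ ∈ G, Shape φ)
    (b : MvPolynomial (Fin 3) k) (hb : ∀ φ ∈ G, φ b = b) (hb2 : pderiv 2 b = 0)
    (g : MvPolynomial (Fin 3) k ≃ₐ[k] MvPolynomial (Fin 3) k) (hgG : g ∈ G)
    (x y : k) (ξ : k)
    (hg0 : ∀ z : k, rho ![x, y, z] (g (X 0)) = Polynomial.C (ξ * x) * Polynomial.X)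
    (hg1 : ∀ z : k, rho ![x, y, z] (g (X 1)) = Polynomial.C (ξ * y) * Polynomial.X)
    (hξ1 : ξ ≠ 1)
    (d : ℕ) (hd : 0 < d) (hξ : ∀ n, 0 < n → n < d → ξ ^ n ≠ 1)
    (κ : k) (hκ : κ ≠ 0)
    (hab : ∀ z : k, rho ![x, y, z] (pderiv 0 b * (X 0 ^ 2 + 2 * X 0 * X 1)
      - pderiv 1 b * (2 * X 0 * X 1 + X 1 ^ 2)) = Polynomial.C κ * Polynomial.X ^ d) : False := by
  obtain ⟨r, s, N, hN, hinvar⟩ := exists_inv G hfin hsh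
  obtain ⟨-, -, β, γ, h2⟩ := hsh g hgG
  have hξ' : ξ - 1 ≠ 0 := sub_ne_zero.mpr hξ1
  set z := (β * x + γ * y) / (ξ - 1) with hz
  have hz' : β * x + γ * y + z = ξ * z := by rw [hz]; field_simp; ring
  refine core G hinv _ b hinvar hb g hgG ![x, y, z] ξ ?_ d hd hξ (N * κ) (mul_ne_zero hN hκ) ?_
  · intro i
    fin_cases i
    · exact hg0 z
    · exact hg1 z
    · simp only [Fin.reduceFinMk, h2, map_add, map_mul, rho_X, rho_C]
      simp only [Matrix.cons_val]
      have hC := congrArg (fun c : k => Polynomial.C c) hz'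
      simp only [map_add, map_mul] at hC
      linear_combination Polynomial.X * hC
  · have : br (C r * X 0 + C s * X 1 + C N * X 2) b = C N * (pderiv 0 b * (X 0 ^ 2 + 2 * X 0 * X 1)
      - pderiv 1 b * (2 * X 0 * X 1 + X 1 ^ 2)) := by
      simp [br, jacBracket, pderiv_X, hb2]
      ring
    rw [this, map_mul, hab, rho_C, map_mul, mul_assoc]

lemma cyc [CharZero k] [IsAlgClosed k]
    (G : Subgroup (MvPolynomial (Fin 3) k ≃ₐ[k] MvPolynomial (Fin 3) k))
    (hinv : InvariantsPoissonIso (k := k) br G) (hfin : Finite G) (hsh : ∀ φ ∈ G, Shape φ)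
    (hb : ∀ φ ∈ G, φ (X 0 ^ 2 + X 0 * X 1 + X 1 ^ 2) = X 0 ^ 2 + X 0 * X 1 + X 1 ^ 2)
    (g : MvPolynomial (Fin 3) k ≃ₐ[k] MvPolynomial (Fin 3) k) (hgG : g ∈ G)
    (h0 : g (X 0) = X 1) (h1 : g (X 1) = - X 0 - X 1) : False := by
  obtain ⟨w, hw⟩ : ∃ w : k, w ^ 2 + w + 1 = 0 := by
    obtain ⟨w, hw⟩ := IsAlgClosed.exists_pow_nat_eq (-3 : k) (n := 2) (by norm_num)
    refine ⟨(w - 1) / 2, ?_⟩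
    linear_combination hw / 4
  have hw1 : w ≠ 1 := by
    rintro rfl
    norm_num at hw
  have hw0 : w ≠ 0 := by
    rintro rfl
    norm_num at hw
  refine core2 G hinv hfin hsh _ hb (by simp [pderiv_X]) g hgG 1 w w ?_ ?_ hw1 3 (by norm_num) ?_
    (3 * w * (1 - w)) ?_ ?_
  · intro z
    simp [h0, rho_X, C_two]
  · intro z
    have : w * w = - 1 - w := by linear_combination hw
    rw [this]
    simp [h1, rho_X, C_two]
    ring
  · intro n hn hn3
    interval_cases n
    · simpa using hw1
    · intro h
      apply hw1
      have h2 : w = -2 := by linear_combination hw - h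
      rw [h2] at h
      norm_num at h
  · exact mul_ne_zero (mul_ne_zero (by norm_num) hw0) (sub_ne_zero.mpr hw1.symm)
  · intro z
    have hC := congrArg (fun c : k => Polynomial.C c) hw
    simp only [map_add, map_pow, map_one, map_zero] at hC
    simp [pderiv_X, rho_X, rho_two, C_three]
    linear_combination (-2 * Polynomial.X ^ 3 * (Polynomial.C w - 1)) * hC

lemma T_q (i : Fin 3) (φ : MvPolynomial (Fin 3) k ≃ₐ[k] MvPolynomial (Fin 3) k) (h : T i φ) :
    φ (X 0 ^ 2 + X 0 * X 1 + X 1 ^ 2) = X 0 ^ 2 + X 0 * X 1 + X 1 ^ 2 := by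
  fin_cases i <;> obtain ⟨h0, h1⟩ := h <;> simp only [map_add, map_mul, map_pow, h0, h1] <;> ring

lemma T_cyc (i : Fin 3) (φ ψ : MvPolynomial (Fin 3) k ≃ₐ[k] MvPolynomial (Fin 3) k) (h : T i φ)
    (h' : T (i + 1) ψ) : (φ * ψ) (X 0) = X 1 ∧ (φ * ψ) (X 1) = - X 0 - X 1 := by
  fin_cases i <;> obtain ⟨h0, h1⟩ := h <;> obtain ⟨h0', h1'⟩ := h' <;>
    constructor <;> simp only [AlgEquiv.mul_apply, map_add, map_neg, h0, h1, h0', h1'] <;> ring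

/-- fixed linear form -/
noncomputable def U (i : Fin 3) : MvPolynomial (Fin 3) k :=
  match i with
  | 0 => X 0 + 2 * X 1
  | 1 => 2 * X 0 + X 1
  | 2 => X 0 - X 1

lemma T_U (i : Fin 3) (φ : MvPolynomial (Fin 3) k ≃ₐ[k] MvPolynomial (Fin 3) k) (h : T i φ) :
    φ (U i) = U i := by
  fin_cases i <;> obtain ⟨h0, h1⟩ := h <;>
    simp only [U, map_add, map_sub, map_mul, map_ofNat, h0, h1] <;> ring

lemma single [CharZero k]
    (G : Subgroup (MvPolynomial (Fin 3) k ≃ₐ[k] MvPolynomial (Fin 3) k))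
    (hinv : InvariantsPoissonIso (k := k) br G) (hfin : Finite G) (hsh : ∀ φ ∈ G, Shape φ)
    (i : Fin 3)
    (hb : ∀ φ ∈ G, φ (U i) = U i)
    (g : MvPolynomial (Fin 3) k ≃ₐ[k] MvPolynomial (Fin 3) k) (hgG : g ∈ G)
    (hT : T i g) : False := by
  have hn : ∀ n, 0 < n → n < 2 → (-1 : k) ^ n ≠ 1 := by
    intro n h1 h2
    interval_cases n
    norm_num
  have h2 : pderiv 2 (2 : MvPolynomial (Fin 3) k) = 0 := by
    rw [← map_ofNat C 2]; exact pderiv_C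
  have h20 : pderiv 0 (2 : MvPolynomial (Fin 3) k) = 0 := by
    rw [← map_ofNat C 2]; exact pderiv_C
  have h21 : pderiv 1 (2 : MvPolynomial (Fin 3) k) = 0 := by
    rw [← map_ofNat C 2]; exact pderiv_C
  fin_cases i
  · obtain ⟨h0, h1⟩ := hT
    refine core2 G hinv hfin hsh _ hb (by simp [U, pderiv_X, h2]) g hgG 2 (-1) (-1) ?_ ?_ (by norm_num)
      2 (by norm_num) hn 6 (by norm_num) ?_
    · intro z
      simp [h0, rho_X, C_two]
    · intro z
      simp [h1, rho_X, C_two]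
      ring
    · intro z
      simp [U, pderiv_X, rho_X, h20, h21, rho_two, C_two, C_six]
      ring
  · obtain ⟨h0, h1⟩ := hT
    refine core2 G hinv hfin hsh _ hb (by simp [U, pderiv_X, h2]) g hgG (-1) 2 (-1) ?_ ?_ (by norm_num)
      2 (by norm_num) hn (-6) (by norm_num) ?_
    · intro z
      simp [h0, rho_X, C_two]
      ring
    · intro z
      simp [h1, rho_X, C_two]
    · intro z
      simp [U, pderiv_X, rho_X, h20, h21, rho_two, C_two, C_six]
      ring
  · obtain ⟨h0, h1⟩ := hT
    refine core2 G hinv hfin hsh _ hb (by simp [U, pderiv_X, h2]) g hgG 1 1 (-1) ?_ ?_ (by norm_num)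
      2 (by norm_num) hn 6 (by norm_num) ?_
    · intro z
      simp [h0, rho_X, C_two]
    · intro z
      simp [h1, rho_X, C_two]
    · intro z
      simp [U, pderiv_X, rho_X, h20, h21, rho_two, C_two, C_six]
      ring

end PoisAux

/-- With this bracket, if `G` is a nontrivial finite subgroup of graded Poisson
automorphisms generated by Poisson reflections, then `P^G` is not isomorphic to `P`
as a Poisson algebra. -/
theorem stmt_13 {k : Type*} [Field k] [IsAlgClosed k] [CharZero k]
    (G : Subgroup (MvPolynomial (Fin 3) k ≃ₐ[k] MvPolynomial (Fin 3) k))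
    (hG : ∀ φ ∈ G, IsGradedPoissonAut (jacBracket 0 (2 * X 0 * X 1 + X 1 ^ 2) (X 0 ^ 2 + 2 * X 0 * X 1)) φ)
    (hfin : Finite G) (hnt : G ≠ ⊥)
    (hgen : ∃ S : Set (MvPolynomial (Fin 3) k ≃ₐ[k] MvPolynomial (Fin 3) k),
      (∀ φ ∈ S, IsPoissonReflection (jacBracket 0 (2 * X 0 * X 1 + X 1 ^ 2) (X 0 ^ 2 + 2 * X 0 * X 1)) φ) ∧ Subgroup.closure S = G) :
    ¬ InvariantsPoissonIso (jacBracket 0 (2 * X 0 * X 1 + X 1 ^ 2) (X 0 ^ 2 + 2 * X 0 * X 1)) G := by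
  intro hinv
  obtain ⟨S, hS, hcl⟩ := hgen
  have hST := fun φ hφ => PoisAux.refl_type φ (hS φ hφ)
  have hSG : ∀ φ ∈ S, φ ∈ G := fun φ hφ => hcl ▸ Subgroup.subset_closure hφ
  have hsh := PoisAux.shape_of_gen G hfin S hcl (fun φ hφ => (hST φ hφ).1)
  have hq := PoisAux.fix_of_gen G S hcl (X 0 ^ 2 + X 0 * X 1 + X 1 ^ 2)
    (fun φ hφ => by obtain ⟨i, hi⟩ := (hST φ hφ).2; exact PoisAux.T_q i φ hi)
  have hne : S.Nonempty := by
    rw [Set.nonempty_iff_ne_empty]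
    rintro rfl
    exact hnt (by rw [← hcl, Subgroup.closure_empty])
  obtain ⟨g, hgS⟩ := hne
  obtain ⟨i, hi⟩ := (hST g hgS).2
  by_cases hall : ∀ φ ∈ S, PoisAux.T i φ
  · exact PoisAux.single G hinv hfin hsh i
      (PoisAux.fix_of_gen G S hcl _ (fun φ hφ => PoisAux.T_U i φ (hall φ hφ))) g (hSG g hgS) hi
  · push Not at hall
    obtain ⟨ψ, hψS, hψ⟩ := hall
    obtain ⟨j, hj⟩ := (hST ψ hψS).2
    have hij : j = i + 1 ∨ i = j + 1 := by
      have : j ≠ i := by rintro rfl; exact hψ hj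
      revert this
      clear * -
      revert i j
      decide
    rcases hij with rfl | rfl
    · obtain ⟨h0, h1⟩ := PoisAux.T_cyc i g ψ hi hj
      exact PoisAux.cyc G hinv hfin hsh hq _ (G.mul_mem (hSG g hgS) (hSG ψ hψS)) h0 h1
    · obtain ⟨h0, h1⟩ := PoisAux.T_cyc j ψ g hj hi
      exact PoisAux.cyc G hinv hfin hsh hq _ (G.mul_mem (hSG ψ hψS) (hSG g hgS)) h0 h1
end

section
/- Equip P = k[x₁,x₂,x₃] with the Poisson bracket {x₁,x₂} = x₁x₂, {x₂,x₃} = 3x₁² + 2x₁x₂ + x₂x₃, {x₃,x₁} = x₁² + x₁x₃. If G is a nontrivial finite subgroup of the graded Poisson automorphism group of P generated by Poisson reflections, then the invariant subalgebra P^G is not isomorphic to P as a Poisson algebra. -/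
open MvPolynomial

set_option linter.unusedSimpArgs false

/-- the bracket of the statement -/
noncomputable abbrev brk (k : Type*) [Field k] :
    MvPolynomial (Fin 3) k → MvPolynomial (Fin 3) k → MvPolynomial (Fin 3) k :=
  jacBracket (X 0 * X 1) (3 * X 0 ^ 2 + 2 * X 0 * X 1 + X 1 * X 2) (X 0 ^ 2 + X 0 * X 2)

/-- second derivation direction: differentiate in `x` with `w = x + z` fixed -/
noncomputable def DD (k : Type*) [Field k] :
    Derivation k (MvPolynomial (Fin 3) k) (MvPolynomial (Fin 3) k) := pderiv 0 - pderiv 2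

section
variable {k : Type*} [Field k]

lemma DD_X0 : DD k (X 0) = 1 := by
  simp [DD, pderiv_X, Pi.single_apply]
lemma DD_X1 : DD k (X 1) = 0 := by
  simp [DD, pderiv_X, Pi.single_apply]
lemma DD_X2 : DD k (X 2) = -1 := by
  simp [DD, pderiv_X, Pi.single_apply]
lemma DD_C (a : k) : DD k (C a) = 0 := by
  simp [DD]
lemma pd_X (i j : Fin 3) : pderiv i (X j : MvPolynomial (Fin 3) k) = if i = j then 1 else 0 := by
  rw [pderiv_X, Pi.single_apply]; simp [eq_comm]

lemma quad_ext {a b c d e f a' b' c' d' e' f' : k}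
    (h : (C a * X 0 ^ 2 + C b * X 1 ^ 2 + C c * X 2 ^ 2 + C d * (X 0 * X 1) + C e * (X 0 * X 2)
        + C f * (X 1 * X 2) : MvPolynomial (Fin 3) k) =
      C a' * X 0 ^ 2 + C b' * X 1 ^ 2 + C c' * X 2 ^ 2 + C d' * (X 0 * X 1) + C e' * (X 0 * X 2)
        + C f' * (X 1 * X 2)) :
    a = a' ∧ b = b' ∧ c = c' ∧ d = d' ∧ e = e' ∧ f = f' := by
  have H : ∀ v : Fin 3 → k, a * v 0 ^ 2 + b * v 1 ^ 2 + c * v 2 ^ 2 + d * (v 0 * v 1)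
      + e * (v 0 * v 2) + f * (v 1 * v 2) = a' * v 0 ^ 2 + b' * v 1 ^ 2 + c' * v 2 ^ 2
      + d' * (v 0 * v 1) + e' * (v 0 * v 2) + f' * (v 1 * v 2) := by
    intro v
    have := congrArg (eval v) h
    simpa using this
  have h1 := H ![1, 0, 0]
  have h2 := H ![0, 1, 0]
  have h3 := H ![0, 0, 1]
  have h4 := H ![1, 1, 0]
  have h5 := H ![1, 0, 1]
  have h6 := H ![0, 1, 1]
  simp at h1 h2 h3 h4 h5 h6
  subst h1 h2 h3
  refine ⟨rfl, rfl, rfl, ?_, ?_, ?_⟩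
  · linear_combination h4
  · linear_combination h5
  · linear_combination h6

lemma pd0_lin (a b c : k) : pderiv 0 (C a * X 0 + C b * X 1 + C c * X 2 : MvPolynomial (Fin 3) k)
    = C a := by simp [pd_X]
lemma pd1_lin (a b c : k) : pderiv 1 (C a * X 0 + C b * X 1 + C c * X 2 : MvPolynomial (Fin 3) k)
    = C b := by simp [pd_X]
lemma pd2_lin (a b c : k) : pderiv 2 (C a * X 0 + C b * X 1 + C c * X 2 : MvPolynomial (Fin 3) k)
    = C c := by simp [pd_X]

lemma br_lin (a b c a' b' c' : k) :
    brk k (C a * X 0 + C b * X 1 + C c * X 2) (C a' * X 0 + C b' * X 1 + C c' * X 2) =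
    C (3 * (b * c' - c * b') + (c * a' - a * c')) * X 0 ^ 2 + C 0 * X 1 ^ 2 + C 0 * X 2 ^ 2
    + C ((a * b' - b * a') + 2 * (b * c' - c * b')) * (X 0 * X 1)
    + C (c * a' - a * c') * (X 0 * X 2) + C (b * c' - c * b') * (X 1 * X 2) := by
  simp only [brk, jacBracket, pd0_lin, pd1_lin, pd2_lin]
  simp only [map_add, map_sub, map_mul, map_ofNat, map_zero]
  ring

lemma br01 : brk k (X 0) (X 1) = X 0 * X 1 := by
  simp [brk, jacBracket, pd_X]
lemma br12 : brk k (X 1) (X 2) = 3 * X 0 ^ 2 + 2 * X 0 * X 1 + X 1 * X 2 := by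
  simp [brk, jacBracket, pd_X]
lemma br20 : brk k (X 2) (X 0) = X 0 ^ 2 + X 0 * X 2 := by
  simp [brk, jacBracket, pd_X]

lemma refl_eq [CharZero k] (φ : MvPolynomial (Fin 3) k ≃ₐ[k] MvPolynomial (Fin 3) k)
    (h : IsPoissonReflection (brk k) φ) :
    φ (X 0) = - X 0 ∧ φ (X 1) = X 1 ∧ φ (X 2) = X 2 + 2 * X 0 := by
  obtain ⟨⟨-, hb⟩, -, M, hM, ξ, hξ, ⟨m, hm, hξm⟩, hc⟩ := h
  have hξ0 : ξ ≠ 0 := by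
    rintro rfl
    simp [hm.ne'] at hξm
  have hdet : ∀ t : k, (Matrix.scalar (Fin 3) t - M).det = (t - 1) ^ 2 * (t - ξ) := by
    intro t
    rw [← Matrix.eval_charpoly, hc]; simp
  simp only [Matrix.det_fin_three, Matrix.sub_apply, Matrix.scalar_apply, Matrix.diagonal_apply] at hdet
  have hM0 := hM 0
  have hM1 := hM 1
  have hM2 := hM 2
  have hd0 := hdet 0
  have hd1 := hdet 1
  have hdm := hdet (-1)
  have hda := hdet (M 0 0)
  clear hdet hc hM
  simp only [Fin.sum_univ_three] at hM0 hM1 hM2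
  generalize M 0 0 = a0 at *
  generalize M 0 1 = a1 at *
  generalize M 0 2 = a2 at *
  generalize M 1 0 = b0 at *
  generalize M 1 1 = b1 at *
  generalize M 1 2 = b2 at *
  generalize M 2 0 = c0 at *
  generalize M 2 1 = c1 at *
  generalize M 2 2 = c2 at *
  simp at hd0 hd1 hdm hda
  have e1 := hb (X 0) (X 1)
  have e2 := hb (X 1) (X 2)
  have e3 := hb (X 2) (X 0)
  rw [br01, hM0, hM1, br_lin, map_mul, hM0, hM1] at e1
  rw [br12, hM1, hM2, br_lin] at e2
  rw [br20, hM0, hM2, br_lin] at e3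
  have l2 : φ (3 * X 0 ^ 2 + 2 * X 0 * X 1 + X 1 * X 2) = 3 * φ (X 0) ^ 2 + 2 * φ (X 0) * φ (X 1)
      + φ (X 1) * φ (X 2) := by simp only [map_add, map_mul, map_pow, map_ofNat]
  have l3 : φ (X 0 ^ 2 + X 0 * X 2) = φ (X 0) ^ 2 + φ (X 0) * φ (X 2) := by
    simp only [map_add, map_mul, map_pow]
  rw [l2, hM0, hM1, hM2] at e2
  rw [l3, hM0, hM2] at e3
  obtain ⟨p1, p2, p3, p4, p5, p6⟩ := quad_ext (k := k)
    (a := a0 * b0) (b := a1 * b1) (c := a2 * b2) (d := a0 * b1 + a1 * b0)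
    (e := a0 * b2 + a2 * b0) (f := a1 * b2 + a2 * b1)
    (Eq.trans (by simp only [map_add, map_mul]; ring) e1)
  obtain ⟨q1, q2, q3, q4, q5, q6⟩ := quad_ext (k := k)
    (a := 3 * a0 ^ 2 + 2 * a0 * b0 + b0 * c0) (b := 3 * a1 ^ 2 + 2 * a1 * b1 + b1 * c1)
    (c := 3 * a2 ^ 2 + 2 * a2 * b2 + b2 * c2)
    (d := 6 * a0 * a1 + 2 * (a0 * b1 + a1 * b0) + (b0 * c1 + b1 * c0))
    (e := 6 * a0 * a2 + 2 * (a0 * b2 + a2 * b0) + (b0 * c2 + b2 * c0))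
    (f := 6 * a1 * a2 + 2 * (a1 * b2 + a2 * b1) + (b1 * c2 + b2 * c1))
    (Eq.trans (by simp only [map_add, map_mul, map_pow, map_ofNat]; ring)
      e2)
  obtain ⟨r1, r2, r3, r4, r5, r6⟩ := quad_ext (k := k)
    (a := a0 ^ 2 + a0 * c0) (b := a1 ^ 2 + a1 * c1)
    (c := a2 ^ 2 + a2 * c2)
    (d := 2 * a0 * a1 + (a0 * c1 + a1 * c0))
    (e := 2 * a0 * a2 + (a0 * c2 + a2 * c0))
    (f := 2 * a1 * a2 + (a1 * c2 + a2 * c1))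
    (Eq.trans (by simp only [map_add, map_mul, map_pow, map_ofNat]; ring)
      e3)
  clear e1 e2 e3
  have z1 : a0 * b2 = 0 := by
    have : 2 * (a0 * b2) = 0 := by linear_combination p5
    simpa using this
  have z2 : a2 * b1 = 0 := by
    have : 2 * (a2 * b1) = 0 := by linear_combination p6
    simpa using this
  have z3 : a1 * (b2 - b0) = 0 := by
    have : 2 * (a1 * (b2 - b0)) = 0 := by linear_combination -p4 + 2 * z2
    simpa using this
  have hb0 : ¬ (b0 = 0 ∧ b1 = 0 ∧ b2 = 0) := by
    rintro ⟨rfl, rfl, rfl⟩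
    simp at hd0
    exact hξ0 hd0
  have ha1 : a1 = 0 := by
    by_contra h
    have h1 : b1 = 0 := by simpa [h] using p2
    have h2 : b2 = b0 := by simpa [h, sub_eq_zero] using z3
    apply hb0
    by_cases h3 : b2 = 0
    · exact ⟨h2 ▸ h3, h1, h3⟩
    · have h4 : a2 = 0 := by simpa [h3] using p3
      have h5 : a0 = 0 := by simpa [h3] using z1
      exfalso
      rw [h4, h5] at p1
      simp [h, h3] at p1
  subst ha1
  have ha2 : a2 = 0 := by
    by_contra h
    have h1 : b1 = 0 := by simpa [h] using z2
    have h2 : b2 = 0 := by simpa [h] using p3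
    rw [h2] at q3
    have : a2 * a2 = 0 := by linear_combination q3 / 3
    simp [h] at this
  subst ha2
  have ha0 : a0 ≠ 0 := by
    rintro rfl
    simp at hd0
    exact hξ0 hd0
  have h2 : b2 = 0 := by simpa [ha0] using z1
  subst h2
  have h0 : b0 = 0 := by simpa [ha0] using p1
  subst h0
  have hc1 : c1 = 0 := by
    have : 2 * (a0 * c1) = 0 := by linear_combination r4
    simpa [ha0] using this
  subst hc1
  have hc0 : c0 = c2 - a0 := by
    apply mul_left_cancel₀ ha0
    linear_combination r1
  have hbc : b1 * c2 = a0 ^ 2 := by linear_combination -q1 / 3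
  have haξ : a0 = ξ := by
    have h : (a0 - 1) ^ 2 * (a0 - ξ) = 0 := by linear_combination -hda
    rcases mul_eq_zero.mp h with h | h
    · have h' : a0 = 1 := by simpa [sub_eq_zero] using h
      exfalso; apply hξ
      rw [h'] at hbc hd0
      linear_combination hd0 + hbc
    · linear_combination h
  subst haξ
  have hm1 : a0 = -1 := by
    have h : a0 * ((a0 - 1) * (a0 + 1)) = 0 := by linear_combination -hd0 - a0 * hbc
    have h1 : a0 - 1 ≠ 0 := sub_ne_zero.mpr hξ
    have h2 : a0 + 1 = 0 := by simpa [ha0, h1] using h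
    linear_combination h2
  subst hm1
  have hb1 : b1 = 1 := by
    have : (b1 - 1) ^ 2 = 0 := by linear_combination (b1 - 1) * hbc - b1 * hd1 / 2
    have := pow_eq_zero_iff (two_ne_zero) |>.mp this
    linear_combination this
  subst hb1
  have hc2 : c2 = 1 := by linear_combination hbc
  subst hc2
  subst hc0
  refine ⟨?_, ?_, ?_⟩
  · rw [hM0]; simp
  · rw [hM1]; simp
  · rw [hM2]; simp only [map_sub, map_neg, map_zero, map_one]; ring

/-! linear functionals at the origin -/

/-- half-normalised second derivative at the origin -/
noncomputable def LX (f : MvPolynomial (Fin 3) k) : k := constantCoeff (DD k (DD k f))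
/-- derivative in `y` at the origin -/
noncomputable def Ly (f : MvPolynomial (Fin 3) k) : k := constantCoeff (pderiv 1 f)
/-- derivative in `w` at the origin -/
noncomputable def Lw (f : MvPolynomial (Fin 3) k) : k := constantCoeff (pderiv 2 f)

lemma LX_add (f g : MvPolynomial (Fin 3) k) : LX (f + g) = LX f + LX g := by simp [LX]
lemma Ly_add (f g : MvPolynomial (Fin 3) k) : Ly (f + g) = Ly f + Ly g := by simp [Ly]
lemma Lw_add (f g : MvPolynomial (Fin 3) k) : Lw (f + g) = Lw f + Lw g := by simp [Lw]

lemma Ly_mul (f g : MvPolynomial (Fin 3) k) :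
    Ly (f * g) = constantCoeff f * Ly g + constantCoeff g * Ly f := by
  simp [Ly]
lemma Lw_mul (f g : MvPolynomial (Fin 3) k) :
    Lw (f * g) = constantCoeff f * Lw g + constantCoeff g * Lw f := by
  simp [Lw]
lemma LX_mul (f g : MvPolynomial (Fin 3) k) (hf : constantCoeff (DD k f) = 0)
    (hg : constantCoeff (DD k g) = 0) :
    LX (f * g) = constantCoeff f * LX g + constantCoeff g * LX f := by
  simp [LX, hf, hg]

lemma cc_br (f g : MvPolynomial (Fin 3) k) : constantCoeff (brk k f g) = 0 := by
  simp [brk, jacBracket]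
lemma Ly_br (f g : MvPolynomial (Fin 3) k) : Ly (brk k f g) = 0 := by
  simp [brk, jacBracket, Ly, pd_X]
lemma Lw_br (f g : MvPolynomial (Fin 3) k) : Lw (brk k f g) = 0 := by
  simp [brk, jacBracket, Lw, pd_X]

lemma br_alt (f g : MvPolynomial (Fin 3) k) : brk k f g =
    (DD k f * pderiv 1 g - pderiv 1 f * DD k g) * (X 0 * X 1)
    + (pderiv 1 f * pderiv 2 g - pderiv 2 f * pderiv 1 g) * (C 3 * (X 0 * X 0) + X 1 * (X 0 + X 2))
    + (pderiv 2 f * DD k g - DD k f * pderiv 2 g) * (X 0 * (X 0 + X 2)) := by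
  simp only [brk, jacBracket, DD, Derivation.sub_apply, map_ofNat]
  ring

lemma LX_br (f g : MvPolynomial (Fin 3) k) :
    LX (brk k f g) = 6 * (Ly f * Lw g - Lw f * Ly g) := by
  have h1 : ∀ h : MvPolynomial (Fin 3) k, LX (h * (X 0 * X 1)) = 0 := by
    intro h; simp [LX, DD_X0, DD_X1]
  have h2 : ∀ h : MvPolynomial (Fin 3) k,
      LX (h * (C 3 * (X 0 * X 0) + X 1 * (X 0 + X 2))) = 6 * constantCoeff h := by
    intro h; simp [LX, DD_X0, DD_X1, DD_X2, DD_C]; ring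
  have h3 : ∀ h : MvPolynomial (Fin 3) k, LX (h * (X 0 * (X 0 + X 2))) = 0 := by
    intro h; simp [LX, DD_X0, DD_X2]
  rw [br_alt, LX_add, LX_add, h1, h2, h3]
  simp [Ly, Lw]

lemma inv_DD [CharZero k] (φ : MvPolynomial (Fin 3) k ≃ₐ[k] MvPolynomial (Fin 3) k)
    (h0 : φ (X 0) = - X 0) (h1 : φ (X 1) = X 1) (h2 : φ (X 2) = X 2 + 2 * X 0)
    (f : MvPolynomial (Fin 3) k) (hf : φ f = f) : constantCoeff (DD k f) = 0 := by
  have key : ∀ g, constantCoeff (φ g) = constantCoeff g ∧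
      constantCoeff (DD k (φ g)) = - constantCoeff (DD k g) := by
    intro g
    induction g using MvPolynomial.induction_on with
    | C a =>
      have : φ (C a) = C a := φ.commutes a
      rw [this, DD_C]; simp
    | add p q hp hq => simp [hp.1, hp.2, hq.1, hq.2]; ring
    | mul_X p i hp =>
      have hX : constantCoeff (φ (X i)) = 0 ∧
          constantCoeff (DD k (φ (X i))) = - constantCoeff (DD k (X i)) := by
        fin_cases i
        · simp [h0, DD_X0]
        · simp [h1, DD_X1]
        · have h2' : φ (X 2) = X 2 + X 0 + X 0 := by rw [h2]; ring
          simp [h2', DD_X0, DD_X2]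
      simp [hp.1, hX.1, hX.2]
  have := (key f).2
  rw [hf] at this
  exact self_eq_neg.mp this

end

/-- With this bracket, if `G` is a nontrivial finite subgroup of graded Poisson
automorphisms generated by Poisson reflections, then `P^G` is not isomorphic to `P`
as a Poisson algebra. -/
theorem stmt_14 {k : Type*} [Field k] [IsAlgClosed k] [CharZero k]
    (G : Subgroup (MvPolynomial (Fin 3) k ≃ₐ[k] MvPolynomial (Fin 3) k))
    (hG : ∀ φ ∈ G, IsGradedPoissonAut (jacBracket (X 0 * X 1) (3 * X 0 ^ 2 + 2 * X 0 * X 1 + X 1 * X 2) (X 0 ^ 2 + X 0 * X 2)) φ)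
    (hfin : Finite G) (hnt : G ≠ ⊥)
    (hgen : ∃ S : Set (MvPolynomial (Fin 3) k ≃ₐ[k] MvPolynomial (Fin 3) k),
      (∀ φ ∈ S, IsPoissonReflection (jacBracket (X 0 * X 1) (3 * X 0 ^ 2 + 2 * X 0 * X 1 + X 1 * X 2) (X 0 ^ 2 + X 0 * X 2)) φ) ∧ Subgroup.closure S = G) :
    ¬ InvariantsPoissonIso (jacBracket (X 0 * X 1) (3 * X 0 ^ 2 + 2 * X 0 * X 1 + X 1 * X 2) (X 0 ^ 2 + X 0 * X 2)) G := by
  rintro ⟨e, -, hrange, hbr⟩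
  obtain ⟨S, hS, hcl⟩ := hgen
  have hS' := fun φ hφ => refl_eq φ (hS φ hφ)
  obtain ⟨s, hs⟩ : S.Nonempty := by
    rw [Set.nonempty_iff_ne_empty]
    rintro rfl
    exact hnt (by rw [← hcl, Subgroup.closure_empty])
  have hsG : s ∈ G := hcl ▸ Subgroup.subset_closure hs
  have hinv : ∀ u, s (e u) = e u := by
    intro u
    have : e u ∈ Set.range e := ⟨u, rfl⟩
    rw [hrange] at this
    exact this s hsG
  have hD : ∀ u, constantCoeff (DD k (e u)) = 0 := fun u =>
    inv_DD s (hS' s hs).1 (hS' s hs).2.1 (hS' s hs).2.2 _ (hinv u)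
  have hfix : ∀ f, (∀ φ ∈ S, φ f = f) → ∃ u, e u = f := by
    intro f hf
    change f ∈ Set.range e
    rw [hrange]
    intro φ hφ
    rw [← hcl] at hφ
    induction hφ using Subgroup.closure_induction with
    | mem x hx => exact hf x hx
    | one => rfl
    | mul x y _ _ hx hy => rw [AlgEquiv.mul_apply, hy, hx]
    | inv x _ hx =>
      have : x⁻¹ (x f) = f := by rw [← AlgEquiv.mul_apply, inv_mul_cancel, AlgEquiv.one_apply]
      rwa [hx] at this
  obtain ⟨u1, hu1⟩ := hfix (X 0 * X 0) (fun φ hφ => by rw [map_mul, (hS' φ hφ).1]; ring)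
  obtain ⟨u2, hu2⟩ := hfix (X 1) (fun φ hφ => (hS' φ hφ).2.1)
  obtain ⟨u3, hu3⟩ := hfix (X 0 + X 2) (fun φ hφ => by
    rw [map_add, (hS' φ hφ).1, (hS' φ hφ).2.2]; ring)
  -- nondegeneracy
  have hnd : ∀ a b c : k,
      (a * LX (e (X 0)) + b * Ly (e (X 0)) + c * Lw (e (X 0)) = 0) →
      (a * LX (e (X 1)) + b * Ly (e (X 1)) + c * Lw (e (X 1)) = 0) →
      (a * LX (e (X 0 + X 2)) + b * Ly (e (X 0 + X 2)) + c * Lw (e (X 0 + X 2)) = 0) →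
      a = 0 ∧ b = 0 ∧ c = 0 := by
    intro a b c h0 h1 h2
    have h2' : a * LX (e (X 2)) + b * Ly (e (X 2)) + c * Lw (e (X 2)) = 0 := by
      rw [map_add, LX_add, Ly_add, Lw_add] at h2
      linear_combination h2 - h0
    have hall : ∀ u, a * LX (e u) + b * Ly (e u) + c * Lw (e u) = 0 := by
      intro u
      induction u using MvPolynomial.induction_on with
      | C r =>
        have : e (C r) = C r := e.commutes r
        rw [this]; simp [LX, Ly, Lw, DD_C]
      | add p q hp hq =>
        rw [map_add, LX_add, Ly_add, Lw_add]; linear_combination hp + hq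
      | mul_X p i hp =>
        have hi : a * LX (e (X i)) + b * Ly (e (X i)) + c * Lw (e (X i)) = 0 := by
          fin_cases i
          · exact h0
          · exact h1
          · exact h2'
        rw [map_mul, LX_mul _ _ (hD _) (hD _), Ly_mul, Lw_mul]
        linear_combination constantCoeff (e p) * hi + constantCoeff (e (X i)) * hp
    have g1 := hall u1
    have g2 := hall u2
    have g3 := hall u3
    rw [hu1] at g1
    rw [hu2] at g2
    rw [hu3] at g3
    simp [LX, Ly, Lw, DD_X0, DD_X1, DD_X2, pd_X] at g1 g2 g3
    exact ⟨g1, g2, g3⟩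
  have b1 : brk k (X 0) (X 1) = X 0 * X 1 := br01
  have b2 : brk k (X 0 + X 2) (X 0) = X 0 * (X 0 + X 2) := by
    simp [brk, jacBracket, pd_X]; ring
  have b3 : brk k (X 1) (X 0 + X 2) = C 3 * (X 0 * X 0) + X 1 * (X 0 + X 2) := by
    simp [brk, jacBracket, pd_X, map_ofNat]; ring
  have hA := hD (X 0)
  have hB := hD (X 1)
  have hC := hD (X 0 + X 2)
  have c1 := hbr (X 0) (X 1)
  have c2 := hbr (X 0 + X 2) (X 0)
  have c3 := hbr (X 1) (X 0 + X 2)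
  change e (brk k _ _) = brk k _ _ at c1 c2 c3
  have hC3 : e (C 3) = C 3 := e.commutes 3
  rw [b1, map_mul] at c1
  rw [b2, map_mul] at c2
  rw [b3, map_add, map_mul, map_mul, map_mul, hC3] at c3
  generalize e (X 0) = A at *
  generalize e (X 1) = B at *
  generalize e (X 0 + X 2) = W at *
  have m3 : constantCoeff (DD k (A * A)) = 0 := by simp [hA]
  have m3' : constantCoeff (DD k (C 3 : MvPolynomial (Fin 3) k)) = 0 := by simp [DD_C]
  have z3 : LX (C 3 : MvPolynomial (Fin 3) k) = 0 := by simp [LX, DD_C]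
  have z3y : Ly (C 3 : MvPolynomial (Fin 3) k) = 0 := by simp [Ly]
  have z3w : Lw (C 3 : MvPolynomial (Fin 3) k) = 0 := by simp [Lw]
  have z3c : constantCoeff (C 3 : MvPolynomial (Fin 3) k) = 3 := constantCoeff_C _ _
  have c1c := congrArg constantCoeff c1
  have c1X := congrArg LX c1
  have c1y := congrArg Ly c1
  have c1w := congrArg Lw c1
  have c2c := congrArg constantCoeff c2
  have c2X := congrArg LX c2
  have c2y := congrArg Ly c2
  have c2w := congrArg Lw c2
  have c3c := congrArg constantCoeff c3
  have c3X := congrArg LX c3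
  rw [cc_br] at c1c c2c c3c
  rw [Ly_br, Ly_mul] at c1y c2y
  rw [Lw_br, Lw_mul] at c1w c2w
  rw [LX_br, LX_mul _ _ hA hB] at c1X
  rw [LX_br, LX_mul _ _ hA hC] at c2X
  rw [LX_br, LX_add, LX_mul _ _ m3' m3, LX_mul _ _ hA hA, LX_mul _ _ hB hC, z3, z3c] at c3X
  simp only [map_add, map_mul, z3c] at c1c c2c c3c
  clear c1 c2 c3 hD hu1 hu2 hu3 hinv hfix hS'
  generalize constantCoeff A = α at *
  generalize constantCoeff B = β at *
  generalize constantCoeff W = γ at *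
  have hα : α = 0 := by
    by_contra h
    have h1 : β = 0 := by simpa [h] using c1c
    rw [h1] at c3c
    simp [h] at c3c
  subst hα
  have hβγ : β * γ = 0 := by linear_combination c3c
  let N : Matrix (Fin 3) (Fin 3) k := !![LX A, Ly A, Lw A; LX B, Ly B, Lw B; LX W, Ly W, Lw W]
  have hN : N.det ≠ 0 := by
    intro h
    obtain ⟨v, hv, hv0⟩ := Matrix.exists_mulVec_eq_zero_iff.mpr h
    have w0 := congrFun hv0 0
    have w1 := congrFun hv0 1
    have w2 := congrFun hv0 2
    simp [N, Matrix.mulVec, dotProduct, Fin.sum_univ_three] at w0 w1 w2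
    obtain ⟨x0, x1, x2⟩ := hnd (v 0) (v 1) (v 2) (by linear_combination w0)
      (by linear_combination w1) (by linear_combination w2)
    apply hv
    funext i
    fin_cases i <;> assumption
  apply hN
  simp only [N, Matrix.det_fin_three, Matrix.of_apply, Matrix.cons_val', Matrix.cons_val_zero,
    Matrix.cons_val_one, Matrix.cons_val]
  clear hN N hnd
  generalize LX A = AX at *
  generalize LX B = BX at *
  generalize LX W = WX at *
  generalize Ly A = Ay at *
  generalize Ly B = By at *
  generalize Ly W = Wy at *
  generalize Lw A = Aw at *
  generalize Lw B = Bw at *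
  generalize Lw W = Ww at *
  by_cases hβ : β = 0
  · subst hβ
    by_cases hγ : γ = 0
    · subst hγ
      linear_combination (-(1:k)/6) * (AX * c3X + BX * c2X + WX * c1X)
    · have h1 : Ay = 0 := by simpa [hγ] using c2y
      have h2 : Aw = 0 := by simpa [hγ] using c2w
      subst h1 h2
      have h3 : AX = 0 := by simpa [hγ] using c2X
      subst h3; ring
  · have h1 : Ay = 0 := by simpa [hβ] using c1y
    have h2 : Aw = 0 := by simpa [hβ] using c1w
    subst h1 h2
    have h3 : AX = 0 := by simpa [hβ] using c1X
    subst h3; ring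
end
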